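/- arXiv:2603.21946 — 5 statements merged into one kernel-verified Lean document; each statement's English description precedes it below -/
import Mathlib

section
/- Let M be a von Neumann algebra acting on a complex Hilbert space H (i.e., a unital *-subalgebra of B(H) equal to its double commutant), and let A ⊆ M be a commutative unital norm-closed *-subalgebra. Suppose there exists a faithful conditional expectation E : M → A. Then A is a von Neumann subalgebra of M; in particular A equals its own double commutant in B(H). -/
namespace FEVN
open Filter Topology ComplexOrder
open scoped InnerProductSpace

set_option linter.unusedSectionVars false

section
variable {H : Type*} [NormedAddCommGroup H] [InnerProductSpace ℂ H] [CompleteSpace H]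

lemma le_abs_sa (z : H →L[ℂ] H) (hz : IsSelfAdjoint z) : z ≤ CFC.abs z := by
  rw [← sub_nonneg, CFC.abs_sub_self z hz]
  have := CFC.negPart_nonneg z
  rw [two_smul]; exact add_nonneg this this

lemma neg_le_abs_sa (z : H →L[ℂ] H) (hz : IsSelfAdjoint z) : -z ≤ CFC.abs z := by
  rw [← CFC.abs_neg]; exact le_abs_sa _ hz.neg

lemma abs_le_of_commute (x y : H →L[ℂ] H) (hx : IsSelfAdjoint x) (h : Commute x y)
    (h1 : x ≤ y) (h2 : -x ≤ y) : CFC.abs x ≤ y := by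
  have hy : 0 ≤ y := by
    have h3 : (0 : H →L[ℂ] H) ≤ y + y := by
      have := add_le_add h1 h2
      simpa using this
    have h4 : y = (2⁻¹ : ℝ) • (y + y) := by
      rw [← two_smul ℝ y, smul_smul]; norm_num
    rw [h4]; exact smul_nonneg (by norm_num) h3
  have h5 : 0 ≤ (y - x) * (y + x) := by
    refine Commute.mul_nonneg (sub_nonneg.2 h1) ?_ ?_
    · have := sub_nonneg.2 h2
      simpa using this
    · exact ((Commute.refl y).sub_left h).add_right (h.symm.sub_left (Commute.refl x))
  have h6 : star x * x ≤ star y * y := by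
    rw [hx.star_eq, (IsSelfAdjoint.of_nonneg hy).star_eq, ← sub_nonneg]
    convert h5 using 1
    rw [sub_mul, mul_add, mul_add, h.eq]; abel
  have := CFC.sqrt_le_sqrt _ _ h6
  rw [← CFC.abs_of_nonneg y hy]
  exact this

lemma norm_apply_sq (z : H →L[ℂ] H) (ξ : H) :
    ‖z ξ‖ ^ 2 = (⟪(star z * z) ξ, ξ⟫_ℂ).re := by
  rw [mul_apply_eq_comp, ContinuousLinearMap.star_eq_adjoint,
    ContinuousLinearMap.adjoint_inner_left, ← inner_self_eq_norm_sq (𝕜 := ℂ)]; rfl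

lemma norm_abs_apply (z : H →L[ℂ] H) (ξ : H) : ‖CFC.abs z ξ‖ = ‖z ξ‖ := by
  rw [← sq_eq_sq₀ (norm_nonneg _) (norm_nonneg _), norm_apply_sq, norm_apply_sq,
    (IsSelfAdjoint.of_nonneg (CFC.abs_nonneg z)).star_eq, CFC.abs_mul_abs]

lemma le_iff_inner (x y : H →L[ℂ] H) :
    x ≤ y ↔ ∀ ξ, ⟪x ξ, ξ⟫_ℂ ≤ ⟪y ξ, ξ⟫_ℂ := by
  rw [ContinuousLinearMap.le_def, ContinuousLinearMap.isPositive_iff_complex]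
  refine forall_congr' fun ξ => ?_
  rw [sub_apply, inner_sub_left, ← sub_nonneg (a := ⟪y ξ, ξ⟫_ℂ), Complex.nonneg_iff, Complex.ext_iff]
  simp only [RCLike.re_to_complex, Complex.ofReal_re, Complex.ofReal_im, true_and]
  exact and_comm

lemma re_le_of_le {x y : H →L[ℂ] H} (h : x ≤ y) (ξ : H) :
    (⟪x ξ, ξ⟫_ℂ).re ≤ (⟪y ξ, ξ⟫_ℂ).re := by
  rw [ContinuousLinearMap.le_def] at h
  have := h.re_inner_nonneg_left ξ
  simpa [inner_sub_left] using this

noncomputable def oinf (x y : H →L[ℂ] H) : H →L[ℂ] H := (2⁻¹ : ℝ) • (x + y - CFC.abs (x - y))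

lemma le_half_smul {x y : H →L[ℂ] H} (h : x + x ≤ y) : x ≤ (2⁻¹ : ℝ) • y := by
  have h4 : x = (2⁻¹ : ℝ) • (x + x) := by
    rw [← two_smul ℝ x, smul_smul]; norm_num
  rw [h4]; exact smul_le_smul_of_nonneg_left h (by norm_num)

lemma half_smul_le {x y : H →L[ℂ] H} (h : y ≤ x + x) : (2⁻¹ : ℝ) • y ≤ x := by
  have h4 : x = (2⁻¹ : ℝ) • (x + x) := by
    rw [← two_smul ℝ x, smul_smul]; norm_num
  rw [h4]; exact smul_le_smul_of_nonneg_left h (by norm_num)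

lemma oinf_le_left (x y : H →L[ℂ] H) (hx : IsSelfAdjoint x) (hy : IsSelfAdjoint y) :
    oinf x y ≤ x := by
  apply half_smul_le
  have := neg_le_abs_sa _ (hx.sub hy)
  rw [← sub_nonneg] at this ⊢
  convert this using 1; abel

lemma oinf_le_right (x y : H →L[ℂ] H) (hx : IsSelfAdjoint x) (hy : IsSelfAdjoint y) :
    oinf x y ≤ y := by
  apply half_smul_le
  have := le_abs_sa _ (hx.sub hy)
  rw [← sub_nonneg] at this ⊢
  convert this using 1; abel

lemma le_oinf (z x y : H →L[ℂ] H) (hx : IsSelfAdjoint x) (hy : IsSelfAdjoint y)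
    (hxy : Commute x y) (hzx : Commute z x) (hzy : Commute z y) (h1 : z ≤ x) (h2 : z ≤ y) :
    z ≤ oinf x y := by
  apply le_half_smul
  have : CFC.abs (x - y) ≤ x + y - (z + z) := by
    apply abs_le_of_commute _ _ (hx.sub hy)
    · have a1 : Commute (x - y) x := (Commute.refl x).sub_left hxy.symm
      have a2 : Commute (x - y) y := hxy.sub_left (Commute.refl y)
      have a3 : Commute (x - y) z := hzx.symm.sub_left hzy.symm
      exact (a1.add_right a2).sub_right (a3.add_right a3)
    · have := add_le_add h2 h2
      rw [← sub_nonneg] at this ⊢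
      convert this using 1; abel
    · have := add_le_add h1 h1
      rw [← sub_nonneg] at this ⊢
      convert this using 1; abel
  rw [← sub_nonneg] at this ⊢
  convert this using 1; abel

lemma norm_oinf_sub_apply (x y T : H →L[ℂ] H) (ξ : H) :
    ‖(oinf x y - T) ξ‖ ≤ ‖(x - T) ξ‖ + ‖(y - T) ξ‖ := by
  have e : (oinf x y - T) ξ =
      (2⁻¹ : ℝ) • ((x - T) ξ + (y - T) ξ - CFC.abs (x - y) ξ) := by
    have : T ξ = (2⁻¹ : ℝ) • (T ξ + T ξ) := by
      rw [← two_smul ℝ (T ξ), smul_smul]; norm_num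
    simp only [oinf, sub_apply, smul_apply,
      add_apply]
    nth_rewrite 1 [this]
    rw [← smul_sub]; congr 1; abel
  have e2 : ‖(x - y) ξ‖ ≤ ‖(x - T) ξ‖ + ‖(y - T) ξ‖ := by
    have : (x - y) ξ = (x - T) ξ - (y - T) ξ := by simp
    rw [this]; exact norm_sub_le _ _
  rw [e, norm_smul]
  have e3 := norm_sub_le ((x - T) ξ + (y - T) ξ) (CFC.abs (x - y) ξ)
  have e4 := norm_add_le ((x - T) ξ) ((y - T) ξ)
  rw [norm_abs_apply] at e3
  have : ‖(2⁻¹ : ℝ)‖ = 2⁻¹ := by norm_num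
  rw [this]; linarith

lemma abs_mem (A : StarSubalgebra ℂ (H →L[ℂ] H)) (hA : IsClosed (A : Set (H →L[ℂ] H)))
    (x : H →L[ℂ] H) (hx : x ∈ A) (h : IsSelfAdjoint x) : CFC.abs x ∈ A := by
  rw [CFC.abs_eq_cfc_norm x h]
  have : IsClosed (A : Set (H →L[ℂ] H)) := hA
  exact cfc_mem (𝕜 := ℝ) (𝕜' := ℂ) _ hx

lemma rsmul_mem (A : StarSubalgebra ℂ (H →L[ℂ] H)) (r : ℝ)
    (x : H →L[ℂ] H) (hx : x ∈ A) : r • x ∈ A := by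
  rw [← Complex.coe_smul]; exact A.smul_mem hx _

lemma oinf_mem (A : StarSubalgebra ℂ (H →L[ℂ] H)) (hA : IsClosed (A : Set (H →L[ℂ] H)))
    (x y : H →L[ℂ] H) (hx : x ∈ A) (hy : y ∈ A) (h : IsSelfAdjoint x) (h' : IsSelfAdjoint y) :
    oinf x y ∈ A :=
  rsmul_mem A _ _ (sub_mem (add_mem hx hy) (abs_mem A hA _ (sub_mem hx hy) (h.sub h')))

lemma weak_limit {ι : Type*} (F : Ultrafilter ι) (f : ι → (H →L[ℂ] H)) (C : ℝ)
    (hC : ∀ i, ‖f i‖ ≤ C) :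
    ∃ q : H →L[ℂ] H, ∀ y x, Tendsto (fun i => ⟪f i y, x⟫_ℂ) F (𝓝 ⟪q y, x⟫_ℂ) := by
  have bd : ∀ y x i, ‖⟪f i y, x⟫_ℂ‖ ≤ C * ‖y‖ * ‖x‖ := fun y x i => by
    refine (norm_inner_le_norm _ _).trans ?_
    gcongr
    exact (f i).le_of_opNorm_le (hC i) y
  have key : ∀ y x, ∃ c : ℂ, ‖c‖ ≤ C * ‖y‖ * ‖x‖ ∧
      Tendsto (fun i => ⟪f i y, x⟫_ℂ) F (𝓝 c) := fun y x => by
    have hc := isCompact_closedBall (0 : ℂ) (C * ‖y‖ * ‖x‖)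
    obtain ⟨c, hc1, hc2⟩ := hc.ultrafilter_le_nhds (F.map (fun i => ⟪f i y, x⟫_ℂ)) (by
      rw [le_principal_iff]
      refine Filter.mem_map.2 (Filter.mem_of_superset Filter.univ_mem ?_)
      intro i _
      simpa using bd y x i)
    exact ⟨c, by simpa using hc1, hc2⟩
  choose c hcb hct using key
  have u : ∀ y x d, Tendsto (fun i => ⟪f i y, x⟫_ℂ) F (𝓝 d) → c y x = d :=
    fun y x d h => tendsto_nhds_unique (hct y x) h
  let φ : H → (H →L[ℂ] ℂ) := fun y => LinearMap.mkContinuous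
    { toFun := c y
      map_add' := fun a b => u _ _ _ (by
        simp only [inner_add_right]; exact (hct y a).add (hct y b))
      map_smul' := fun r a => u _ _ _ (by
        simp only [inner_smul_right]; exact (hct y a).const_mul r) } (C * ‖y‖) (hcb y)
  have hφ : ∀ y x, φ y x = c y x := fun y x => rfl
  let g : H → H := fun y => (InnerProductSpace.toDual ℂ H).symm (φ y)
  have hg : ∀ y x, ⟪g y, x⟫_ℂ = c y x := fun y x => by
    simp [g, hφ]
  have hC0 : ∀ y, ‖g y‖ ≤ C * ‖y‖ := fun y => by
    have h1 : 0 ≤ C := by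
      obtain ⟨i⟩ := F.neBot.nonempty
      exact (norm_nonneg _).trans (hC i)
    simp only [g, LinearIsometryEquiv.norm_map]
    exact LinearMap.mkContinuous_norm_le _ (by positivity) _
  let q : H →L[ℂ] H := LinearMap.mkContinuous
    { toFun := g
      map_add' := fun a b => ext_inner_right ℂ fun x => by
        rw [inner_add_left, hg, hg, hg]
        exact u _ _ _ (by simp only [map_add, inner_add_left]; exact (hct a x).add (hct b x))
      map_smul' := fun r a => ext_inner_right ℂ fun x => by
        rw [RingHom.id_apply, inner_smul_left, hg, hg]
        exact u _ _ _ (by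
          simp only [map_smul, inner_smul_left]; exact (hct a x).const_mul _) } C hC0
  refine ⟨q, fun y x => ?_⟩
  have : ⟪q y, x⟫_ℂ = c y x := hg y x
  rw [this]; exact hct y x

lemma weak_le {ι : Type*} {F : Ultrafilter ι} {f : ι → (H →L[ℂ] H)} {q : H →L[ℂ] H}
    (hq : ∀ y x, Tendsto (fun i => ⟪f i y, x⟫_ℂ) F (𝓝 ⟪q y, x⟫_ℂ)) (b : H →L[ℂ] H)
    (h : ∀ᶠ i in F, f i ≤ b) : q ≤ b := by
  rw [le_iff_inner]
  intro ξ
  exact le_of_tendsto (hq ξ ξ) (h.mono fun i hi => (le_iff_inner _ _).1 hi ξ)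

lemma weak_ge {ι : Type*} {F : Ultrafilter ι} {f : ι → (H →L[ℂ] H)} {q : H →L[ℂ] H}
    (hq : ∀ y x, Tendsto (fun i => ⟪f i y, x⟫_ℂ) F (𝓝 ⟪q y, x⟫_ℂ)) (b : H →L[ℂ] H)
    (h : ∀ᶠ i in F, b ≤ f i) : b ≤ q := by
  rw [le_iff_inner]
  intro ξ
  exact ge_of_tendsto (hq ξ ξ) (h.mono fun i hi => (le_iff_inner _ _).1 hi ξ)

lemma weak_commute {ι : Type*} {F : Ultrafilter ι} {f : ι → (H →L[ℂ] H)} {q : H →L[ℂ] H}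
    (hq : ∀ y x, Tendsto (fun i => ⟪f i y, x⟫_ℂ) F (𝓝 ⟪q y, x⟫_ℂ)) (c : H →L[ℂ] H)
    (h : ∀ i, c * f i = f i * c) : c * q = q * c := by
  ext y
  refine ext_inner_right ℂ fun x => ?_
  rw [mul_apply_eq_comp, mul_apply_eq_comp, ← ContinuousLinearMap.adjoint_inner_right]
  refine tendsto_nhds_unique (hq y _) ((hq (c y) x).congr fun i => ?_)
  rw [ContinuousLinearMap.adjoint_inner_right, ← mul_apply_eq_comp, ← mul_apply_eq_comp, h]

lemma weak_norm {ι : Type*} {F : Ultrafilter ι} {f : ι → (H →L[ℂ] H)} {q : H →L[ℂ] H}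
    (hq : ∀ y x, Tendsto (fun i => ⟪f i y, x⟫_ℂ) F (𝓝 ⟪q y, x⟫_ℂ)) (T : H →L[ℂ] H) (ξ : H) (ε : ℝ)
    (h : ∀ᶠ i in F, ‖(f i - T) ξ‖ ≤ ε) : ‖(q - T) ξ‖ ≤ ε := by
  set v := (q - T) ξ with hv
  have h1 : Tendsto (fun i => ⟪(f i - T) ξ, v⟫_ℂ) F (𝓝 ⟪(q - T) ξ, v⟫_ℂ) := by
    simp only [sub_apply, inner_sub_left]
    exact (hq ξ v).sub_const _
  have h2 : ‖⟪(q - T) ξ, v⟫_ℂ‖ ≤ ε * ‖v‖ := by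
    refine le_of_tendsto h1.norm (h.mono fun i hi => ?_)
    exact (norm_inner_le_norm _ _).trans (by gcongr)
  rw [← hv, inner_self_eq_norm_sq_to_K] at h2
  rw [norm_pow, RCLike.norm_ofReal, abs_norm, sq] at h2
  by_contra! hlt
  have h0 : 0 ≤ ε := by
    obtain ⟨i, hi⟩ := h.exists
    exact (norm_nonneg _).trans hi
  nlinarith

/-- Monotone closedness. -/
def MC (A : StarSubalgebra ℂ (H →L[ℂ] H)) : Prop :=
  ∀ D : Set (H →L[ℂ] H), D.Nonempty → DirectedOn (· ≤ ·) D →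
    (∀ a ∈ D, a ∈ A ∧ 0 ≤ a ∧ a ≤ 1) →
    ∃ q ∈ A, IsLUB D q ∧ ∀ T ξ ε, ∀ a₀ ∈ D,
      (∀ a ∈ D, a₀ ≤ a → ‖(a - T) ξ‖ ≤ ε) → ‖(q - T) ξ‖ ≤ ε

lemma MC_of_expectation (M : VonNeumannAlgebra H)
    (A : StarSubalgebra ℂ (H →L[ℂ] H))
    (hAM : (A : Set (H →L[ℂ] H)) ⊆ (M : Set (H →L[ℂ] H)))
    (E : (H →L[ℂ] H) →ₗ[ℂ] (H →L[ℂ] H))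
    (hErange : ∀ x ∈ M, E x ∈ A)
    (hEproj : ∀ a ∈ A, E a = a)
    (hEpos : ∀ x ∈ M, 0 ≤ x → 0 ≤ E x)
    (hEfaithful : ∀ x ∈ M, 0 ≤ x → E x = 0 → x = 0) : MC A := by
  intro D hne hdir hD
  have : Nonempty D := hne.to_subtype
  have : IsDirectedOrder D := ⟨fun a b => by
    obtain ⟨c, hc, h1, h2⟩ := hdir a a.2 b b.2
    exact ⟨⟨c, hc⟩, h1, h2⟩⟩
  let F : Ultrafilter D := Ultrafilter.of atTop
  have hF : (F : Filter D) ≤ atTop := Ultrafilter.of_le _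
  obtain ⟨q, hq⟩ := weak_limit F (fun a : D => (a : H →L[ℂ] H)) 1 (fun a =>
    (CStarAlgebra.norm_le_one_iff_of_nonneg _ (hD a a.2).2.1).2 (hD a a.2).2.2)
  have hqM : q ∈ M := by
    have : q ∈ (M : Set (H →L[ℂ] H)) := by
      rw [← M.centralizer_centralizer]
      intro c hc
      exact weak_commute hq c fun a => (hc a (hAM (hD a a.2).1)).symm
    exact this
  have hge : ∀ a ∈ D, a ≤ q := fun a ha => 
    weak_ge hq a ((eventually_ge_atTop (⟨a, ha⟩ : D)).filter_mono hF)
  have hlub : IsLUB D q := ⟨hge, fun b hb => weak_le hq b (Eventually.of_forall fun a => hb a.2)⟩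
  have hEq : q ≤ E q := hlub.2 fun a ha => by
    have haA := (hD a ha).1
    have := hEpos (q - a) (sub_mem hqM (hAM haA)) (sub_nonneg.2 (hge a ha))
    rwa [map_sub, hEproj a haA, sub_nonneg] at this
  have hEA := hErange q hqM
  have h0 : E q - q = 0 := hEfaithful _ (sub_mem (hAM hEA) hqM) (sub_nonneg.2 hEq) (by
    rw [map_sub, hEproj _ hEA, sub_self])
  refine ⟨q, by rw [← sub_eq_zero.1 h0]; exact hEA, hlub, fun T ξ ε a₀ ha₀ h => ?_⟩
  exact weak_norm hq T ξ ε 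
    (((eventually_ge_atTop (⟨a₀, ha₀⟩ : D)).filter_mono hF).mono fun a ha => h a a.2 ha)

lemma MC.inf {A : StarSubalgebra ℂ (H →L[ℂ] H)} (hA : MC A)
    (D : Set (H →L[ℂ] H)) (hne : D.Nonempty) (hdir : DirectedOn (· ≥ ·) D)
    (hD : ∀ a ∈ D, a ∈ A ∧ 0 ≤ a ∧ a ≤ 1) :
    ∃ q ∈ A, IsGLB D q ∧ ∀ T ξ ε, ∀ a₀ ∈ D,
      (∀ a ∈ D, a ≤ a₀ → ‖(a - T) ξ‖ ≤ ε) → ‖(q - T) ξ‖ ≤ ε := by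
  obtain ⟨q, hqA, hq, hn⟩ := hA ((fun a => 1 - a) '' D) (hne.image _) (by
    rintro _ ⟨a, ha, rfl⟩ _ ⟨b, hb, rfl⟩
    obtain ⟨c, hc, h1, h2⟩ := hdir a ha b hb
    exact ⟨_, ⟨c, hc, rfl⟩, sub_le_sub_left h1 _, sub_le_sub_left h2 _⟩) (by
    rintro _ ⟨a, ha, rfl⟩
    obtain ⟨h1, h2, h3⟩ := hD a ha
    exact ⟨sub_mem (one_mem _) h1, sub_nonneg.2 h3, sub_le_self _ h2⟩)
  refine ⟨1 - q, sub_mem (one_mem _) hqA, ⟨fun a ha => ?_, fun b hb => ?_⟩,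
    fun T ξ ε a₀ ha₀ h => ?_⟩
  · rw [sub_le_comm]; exact hq.1 ⟨a, ha, rfl⟩
  · rw [le_sub_comm]
    refine hq.2 ?_
    rintro _ ⟨a, ha, rfl⟩
    exact sub_le_sub_left (hb ha) _
  · have := hn (1 - T) ξ ε (1 - a₀) ⟨a₀, ha₀, rfl⟩ (by
      rintro _ ⟨a, ha, rfl⟩ hle
      have := h a ha ((sub_le_sub_iff_left _).1 hle)
      rwa [show (1 - a - (1 - T) : H →L[ℂ] H) = -(a - T) by abel, neg_apply, norm_neg])
    rwa [show (1 - q - T : H →L[ℂ] H) = -(q - (1 - T)) by abel, neg_apply, norm_neg]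

/-- Diagonal amplification. -/
noncomputable def amp (a : H →L[ℂ] H) : WithLp 2 (H × H) →L[ℂ] WithLp 2 (H × H) :=
  ((WithLp.prodContinuousLinearEquiv 2 ℂ H H).symm : H × H →L[ℂ] WithLp 2 (H × H)) ∘L
    (a.prodMap a) ∘L (WithLp.prodContinuousLinearEquiv 2 ℂ H H : WithLp 2 (H × H) →L[ℂ] H × H)

lemma amp_fst (a : H →L[ℂ] H) (u : WithLp 2 (H × H)) : (amp a u).fst = a u.fst := rfl

lemma amp_snd (a : H →L[ℂ] H) (u : WithLp 2 (H × H)) : (amp a u).snd = a u.snd := rfl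

lemma amp_inner (a : H →L[ℂ] H) (u v : WithLp 2 (H × H)) :
    ⟪amp a u, v⟫_ℂ = ⟪u, amp (star a) v⟫_ℂ := by
  simp only [WithLp.prod_inner_apply]
  rw [ContinuousLinearMap.star_eq_adjoint]
  exact congrArg₂ (· + ·) (ContinuousLinearMap.adjoint_inner_right a _ _).symm
    (ContinuousLinearMap.adjoint_inner_right a _ _).symm

noncomputable def in1 : H →L[ℂ] WithLp 2 (H × H) :=
  ((WithLp.prodContinuousLinearEquiv 2 ℂ H H).symm : H × H →L[ℂ] WithLp 2 (H × H)) ∘L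
    (ContinuousLinearMap.inl ℂ H H)
noncomputable def in2 : H →L[ℂ] WithLp 2 (H × H) :=
  ((WithLp.prodContinuousLinearEquiv 2 ℂ H H).symm : H × H →L[ℂ] WithLp 2 (H × H)) ∘L
    (ContinuousLinearMap.inr ℂ H H)
noncomputable def pr1 : WithLp 2 (H × H) →L[ℂ] H :=
  (ContinuousLinearMap.fst ℂ H H) ∘L
    (WithLp.prodContinuousLinearEquiv 2 ℂ H H : WithLp 2 (H × H) →L[ℂ] H × H)
noncomputable def pr2 : WithLp 2 (H × H) →L[ℂ] H :=
  (ContinuousLinearMap.snd ℂ H H) ∘L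
    (WithLp.prodContinuousLinearEquiv 2 ℂ H H : WithLp 2 (H × H) →L[ℂ] H × H)

lemma K_ext (u v : WithLp 2 (H × H)) (h1 : pr1 u = pr1 v) (h2 : pr2 u = pr2 v) : u = v := by
  apply (WithLp.prodContinuousLinearEquiv 2 ℂ H H).injective
  exact Prod.ext h1 h2

lemma pr1_amp (a : H →L[ℂ] H) (u : WithLp 2 (H × H)) : pr1 (amp a u) = a (pr1 u) := rfl
lemma pr2_amp (a : H →L[ℂ] H) (u : WithLp 2 (H × H)) : pr2 (amp a u) = a (pr2 u) := rfl
lemma amp_in1 (a : H →L[ℂ] H) (x : H) : amp a (in1 x) = in1 (a x) := by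
  apply K_ext
  · rfl
  · rw [pr2_amp]; exact map_zero a
lemma amp_in2 (a : H →L[ℂ] H) (x : H) : amp a (in2 x) = in2 (a x) := by
  apply K_ext
  · rw [pr1_amp]; exact map_zero a
  · rfl
lemma K_decomp (u : WithLp 2 (H × H)) : u = in1 (pr1 u) + in2 (pr2 u) := by
  apply K_ext
  · rw [map_add]; exact (add_zero _).symm
  · rw [map_add]; exact (zero_add _).symm

lemma norm_pr1_le (u : WithLp 2 (H × H)) : ‖pr1 u‖ ≤ ‖u‖ := by
  have := WithLp.prod_norm_sq_eq_of_L2 u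
  have h : ‖u‖ ^ 2 = ‖pr1 u‖ ^ 2 + ‖pr2 u‖ ^ 2 := this
  exact le_of_sq_le_sq (by nlinarith [sq_nonneg ‖pr2 u‖]) (norm_nonneg _)
lemma norm_pr2_le (u : WithLp 2 (H × H)) : ‖pr2 u‖ ≤ ‖u‖ := by
  have := WithLp.prod_norm_sq_eq_of_L2 u
  have h : ‖u‖ ^ 2 = ‖pr1 u‖ ^ 2 + ‖pr2 u‖ ^ 2 := this
  exact le_of_sq_le_sq (by nlinarith [sq_nonneg ‖pr1 u‖]) (norm_nonneg _)

lemma comm_amp (A : StarSubalgebra ℂ (H →L[ℂ] H)) (T : H →L[ℂ] H)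
    (hT : T ∈ Set.centralizer (Set.centralizer (A : Set (H →L[ℂ] H))))
    (P : WithLp 2 (H × H) →L[ℂ] WithLp 2 (H × H))
    (hP : ∀ a ∈ A, ∀ u, P (amp a u) = amp a (P u)) (u : WithLp 2 (H × H)) :
    P (amp T u) = amp T (P u) := by
  have c11 : (pr1 ∘L P ∘L in1) ∈ Set.centralizer (A : Set (H →L[ℂ] H)) := fun a ha => by
    ext x
    show a (pr1 (P (in1 x))) = pr1 (P (in1 (a x)))
    rw [← amp_in1, hP a ha, pr1_amp]
  have c12 : (pr1 ∘L P ∘L in2) ∈ Set.centralizer (A : Set (H →L[ℂ] H)) := fun a ha => by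
    ext x
    show a (pr1 (P (in2 x))) = pr1 (P (in2 (a x)))
    rw [← amp_in2, hP a ha, pr1_amp]
  have c21 : (pr2 ∘L P ∘L in1) ∈ Set.centralizer (A : Set (H →L[ℂ] H)) := fun a ha => by
    ext x
    show a (pr2 (P (in1 x))) = pr2 (P (in1 (a x)))
    rw [← amp_in1, hP a ha, pr2_amp]
  have c22 : (pr2 ∘L P ∘L in2) ∈ Set.centralizer (A : Set (H →L[ℂ] H)) := fun a ha => by
    ext x
    show a (pr2 (P (in2 x))) = pr2 (P (in2 (a x)))
    rw [← amp_in2, hP a ha, pr2_amp]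
  have d11 : ∀ x, pr1 (P (in1 (T x))) = T (pr1 (P (in1 x))) := fun x => DFunLike.congr_fun (hT _ c11) x
  have d12 : ∀ x, pr1 (P (in2 (T x))) = T (pr1 (P (in2 x))) := fun x => DFunLike.congr_fun (hT _ c12) x
  have d21 : ∀ x, pr2 (P (in1 (T x))) = T (pr2 (P (in1 x))) := fun x => DFunLike.congr_fun (hT _ c21) x
  have d22 : ∀ x, pr2 (P (in2 (T x))) = T (pr2 (P (in2 x))) := fun x => DFunLike.congr_fun (hT _ c22) x
  rw [K_decomp u]
  simp only [map_add, amp_in1, amp_in2]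
  apply K_ext
  · simp only [map_add, pr1_amp, d11, d12]
  · simp only [map_add, pr2_amp, d21, d22]

lemma density (A : StarSubalgebra ℂ (H →L[ℂ] H)) (T : H →L[ℂ] H)
    (hT : T ∈ Set.centralizer (Set.centralizer (A : Set (H →L[ℂ] H)))) (ξ η : H) (ε : ℝ)
    (hε : 0 < ε) : ∃ a ∈ A, ‖(a - T) ξ‖ ≤ ε ∧ ‖(a - T) η‖ ≤ ε := by
  let v : WithLp 2 (H × H) := in1 ξ + in2 η
  have hv1 : pr1 v = ξ := by simp only [v, map_add]; exact add_zero _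
  have hv2 : pr2 v = η := by simp only [v, map_add]; exact zero_add _
  let S : Submodule ℂ (WithLp 2 (H × H)) :=
    { carrier := {u | ∃ a ∈ A, amp a v = u}
      zero_mem' := ⟨0, zero_mem _, by apply K_ext <;> simp [pr1_amp, pr2_amp]⟩
      add_mem' := by
        rintro _ _ ⟨a, ha, rfl⟩ ⟨b, hb, rfl⟩
        exact ⟨a + b, add_mem ha hb, by apply K_ext <;> simp [pr1_amp, pr2_amp]⟩
      smul_mem' := by
        rintro c _ ⟨a, ha, rfl⟩
        exact ⟨c • a, A.smul_mem ha c, by apply K_ext <;> simp [pr1_amp, pr2_amp]⟩ }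
  let K := S.topologicalClosure
  have hKc : IsClosed (K : Set (WithLp 2 (H × H))) := S.isClosed_topologicalClosure
  have : CompleteSpace K := hKc.completeSpace_coe
  have hinv : ∀ a ∈ A, ∀ u ∈ K, amp a u ∈ K := fun a ha u hu => by
    have hm : Set.MapsTo (amp a) (S : Set (WithLp 2 (H × H))) S := by
      rintro _ ⟨b, hb, rfl⟩
      exact ⟨a * b, mul_mem ha hb, by apply K_ext <;> simp [pr1_amp, pr2_amp]⟩
    exact hm.closure (amp a).continuous hu
  have hP : ∀ a ∈ A, ∀ u, K.starProjection (amp a u) = amp a (K.starProjection u) := fun a ha u => by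
    apply Submodule.eq_starProjection_of_mem_of_inner_eq_zero
    · exact hinv a ha _ (Submodule.starProjection_apply_mem _ _)
    · intro w hw
      rw [← map_sub, amp_inner]
      exact Submodule.starProjection_inner_eq_zero _ _ (hinv _ (star_mem ha) _ hw)
  have hvK : v ∈ K := S.le_topologicalClosure ⟨1, one_mem _, by
    apply K_ext <;> simp [pr1_amp, pr2_amp]⟩
  have hTK : amp T v ∈ K := by
    have h1 := comm_amp A T hT _ hP v
    rw [Submodule.starProjection_eq_self_iff.2 hvK] at h1
    exact Submodule.starProjection_eq_self_iff.1 h1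
  obtain ⟨_, ⟨a, ha, rfl⟩, hlt⟩ := Metric.mem_closure_iff.1 hTK ε hε
  rw [dist_eq_norm, norm_sub_rev] at hlt
  refine ⟨a, ha, ?_, ?_⟩
  · refine le_trans (le_of_eq ?_) ((norm_pr1_le (amp a v - amp T v)).trans hlt.le)
    rw [map_sub, pr1_amp, pr1_amp, hv1, sub_apply]
  · refine le_trans (le_of_eq ?_) ((norm_pr2_le (amp a v - amp T v)).trans hlt.le)
    rw [map_sub, pr2_amp, pr2_amp, hv2, sub_apply]

/-- Elements of the unit interval of `A`. -/
def UI (A : StarSubalgebra ℂ (H →L[ℂ] H)) (a : H →L[ℂ] H) : Prop := a ∈ A ∧ 0 ≤ a ∧ a ≤ 1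

lemma UI.sa {A : StarSubalgebra ℂ (H →L[ℂ] H)} {a : H →L[ℂ] H} (h : UI A a) : IsSelfAdjoint a :=
  IsSelfAdjoint.of_nonneg h.2.1

lemma UI.oinf {A : StarSubalgebra ℂ (H →L[ℂ] H)} (hA : IsClosed (A : Set (H →L[ℂ] H)))
    (hc : ∀ a ∈ A, ∀ b ∈ A, a * b = b * a) {a b : H →L[ℂ] H} (h : UI A a) (h' : UI A b) :
    UI A (oinf a b) :=
  ⟨oinf_mem A hA _ _ h.1 h'.1 h.sa h'.sa,
    le_oinf _ _ _ h.sa h'.sa (hc _ h.1 _ h'.1) (Commute.zero_left _) (Commute.zero_left _)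
      h.2.1 h'.2.1, (oinf_le_left _ _ h.sa h'.sa).trans h.2.2⟩

lemma norm_le_of_star_mul_le {x y : H →L[ℂ] H} (h : star x * x ≤ star y * y) (ξ : H) :
    ‖x ξ‖ ≤ ‖y ξ‖ := by
  refine le_of_sq_le_sq ?_ (norm_nonneg _)
  rw [norm_apply_sq, norm_apply_sq]
  exact re_le_of_le h ξ

lemma norm_abs_sub_le {a T : H →L[ℂ] H} (ha : IsSelfAdjoint a) (hT : 0 ≤ T) (h : Commute a T)
    (ξ : H) : ‖(CFC.abs a - T) ξ‖ ≤ ‖(a - T) ξ‖ := by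
  have hTs : IsSelfAdjoint T := IsSelfAdjoint.of_nonneg hT
  have habs : IsSelfAdjoint (CFC.abs a) := IsSelfAdjoint.of_nonneg (CFC.abs_nonneg a)
  have hc : Commute T (CFC.abs a) := 
    (Commute.cfcAbs_left h (by rw [hTs.star_eq]; exact h)).symm
  apply norm_le_of_star_mul_le
  rw [(habs.sub hTs).star_eq, (ha.sub hTs).star_eq]
  have h1 : 0 ≤ T * (CFC.abs a - a) :=
    Commute.mul_nonneg hT (sub_nonneg.2 (le_abs_sa a ha)) (hc.sub_right h.symm)
  have h2 := add_nonneg h1 h1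
  rw [← sub_nonneg]
  have h3 := CFC.abs_mul_abs a
  rw [ha.star_eq] at h3
  convert h2 using 1
  simp only [sub_mul, mul_sub]
  rw [h3, h.eq, ← hc.eq]
  abel

lemma comm_of_bicomm {A : StarSubalgebra ℂ (H →L[ℂ] H)} (hc : ∀ a ∈ A, ∀ b ∈ A, a * b = b * a)
    {T : H →L[ℂ] H} (hT : T ∈ Set.centralizer (Set.centralizer (A : Set (H →L[ℂ] H))))
    {a : H →L[ℂ] H} (ha : a ∈ A) : Commute a T :=
  hT a fun b hb => hc b hb a ha

lemma norm_half_le (u v w : H) (h1 : ‖u‖ ≤ ‖w‖) (h2 : ‖v‖ ≤ ‖w‖) :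
    ‖(2⁻¹ : ℝ) • (u + v)‖ ≤ ‖w‖ := by
  rw [norm_smul]
  have e3 := norm_add_le u v
  have : ‖(2⁻¹ : ℝ)‖ = 2⁻¹ := by norm_num
  rw [this]; linarith

lemma half_add (T : H →L[ℂ] H) : T = (2⁻¹ : ℝ) • (T + T) := by
  rw [← two_smul ℝ T, smul_smul]; norm_num

lemma trunc_sa (a T : H →L[ℂ] H) (hTs : IsSelfAdjoint T) (c1 : Commute a T)
    (c2 : Commute (star a) T) (c3 : Commute a (star a)) (ζ : H) :
    ‖((2⁻¹ : ℝ) • (a + star a) - T) ζ‖ ≤ ‖(a - T) ζ‖ := by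
  have e : (2⁻¹ : ℝ) • (a + star a) - T = (2⁻¹ : ℝ) • ((a - T) + star (a - T)) := by
    rw [star_sub, hTs.star_eq]
    nth_rewrite 1 [half_add T]
    rw [← smul_sub]; congr 1; abel
  have e2 : ‖star (a - T) ζ‖ ≤ ‖(a - T) ζ‖ := by
    apply norm_le_of_star_mul_le
    rw [star_star, star_sub, hTs.star_eq]
    apply le_of_eq
    simp only [sub_mul, mul_sub]
    rw [c1.eq, c2.eq, c3.eq]
    abel
  rw [e, smul_apply, add_apply]
  exact norm_half_le _ _ _ le_rfl e2

lemma trunc_one (c T : H →L[ℂ] H) (hcs : IsSelfAdjoint c) (hT1 : T ≤ 1) (h : Commute c T) (ζ : H) :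
    ‖(oinf c 1 - T) ζ‖ ≤ ‖(c - T) ζ‖ := by
  have h1s : IsSelfAdjoint (1 : H →L[ℂ] H) := IsSelfAdjoint.one _
  have hcm : Commute (1 - c) (1 - T) :=
    (Commute.one_right _).sub_right ((Commute.one_left T).sub_left h)
  have f := norm_abs_sub_le (a := 1 - c) (T := 1 - T) (h1s.sub hcs) (sub_nonneg.2 hT1) hcm ζ
  rw [← CFC.abs_neg, neg_sub] at f
  rw [show (1 - c - (1 - T) : H →L[ℂ] H) = -(c - T) by abel, neg_apply, norm_neg] at f
  have e : (oinf c 1 - T) = (2⁻¹ : ℝ) • ((c - T) + -(CFC.abs (c - 1) - (1 - T))) := by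
    nth_rewrite 1 [half_add T]
    rw [oinf, ← smul_sub]; congr 1; abel
  rw [e, smul_apply, add_apply]
  refine norm_half_le _ _ _ le_rfl ?_
  rw [neg_apply, norm_neg]
  exact f

lemma density_UI (A : StarSubalgebra ℂ (H →L[ℂ] H)) (hA : IsClosed (A : Set (H →L[ℂ] H)))
    (hc : ∀ a ∈ A, ∀ b ∈ A, a * b = b * a) (T : H →L[ℂ] H)
    (hT : T ∈ Set.centralizer (Set.centralizer (A : Set (H →L[ℂ] H)))) (hT0 : 0 ≤ T) (hT1 : T ≤ 1)
    (ξ η : H) (ε : ℝ) (hε : 0 < ε) : ∃ a, UI A a ∧ ‖(a - T) ξ‖ ≤ ε ∧ ‖(a - T) η‖ ≤ ε := by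
  obtain ⟨a, ha, h1, h2⟩ := density A T hT ξ η ε hε
  have hTs : IsSelfAdjoint T := IsSelfAdjoint.of_nonneg hT0
  obtain ⟨b, hbA, hbs, hb⟩ : ∃ b ∈ A, IsSelfAdjoint b ∧ ∀ ζ, ‖(b - T) ζ‖ ≤ ‖(a - T) ζ‖ :=
    ⟨(2⁻¹ : ℝ) • (a + star a), rsmul_mem A _ _ (add_mem ha (star_mem ha)),
      (IsSelfAdjoint.all (2⁻¹ : ℝ)).smul (IsSelfAdjoint.add_star_self a),
      trunc_sa a T hTs (comm_of_bicomm hc hT ha) (comm_of_bicomm hc hT (star_mem ha))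
        (hc _ ha _ (star_mem ha))⟩
  obtain ⟨c, hcA, hc0, hcn⟩ : ∃ c ∈ A, 0 ≤ c ∧ ∀ ζ, ‖(c - T) ζ‖ ≤ ‖(a - T) ζ‖ :=
    ⟨CFC.abs b, abs_mem A hA b hbA hbs, CFC.abs_nonneg b, fun ζ =>
      (norm_abs_sub_le hbs hT0 (comm_of_bicomm hc hT hbA) ζ).trans (hb ζ)⟩
  have hcs : IsSelfAdjoint c := IsSelfAdjoint.of_nonneg hc0
  have h1s : IsSelfAdjoint (1 : H →L[ℂ] H) := IsSelfAdjoint.one _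
  have hd : UI A (oinf c 1) := ⟨oinf_mem A hA _ _ hcA (one_mem _) hcs h1s,
    le_oinf _ _ _ hcs h1s (Commute.one_right _) (Commute.zero_left _) (Commute.zero_left _)
      hc0 (hT0.trans hT1), oinf_le_right _ _ hcs h1s⟩
  have hdn := fun ζ => (trunc_one c T hcs hT1 (comm_of_bicomm hc hT hcA) ζ).trans (hcn ζ)
  exact ⟨_, hd, (hdn ξ).trans h1, (hdn η).trans h2⟩

/-- Running infima `a n ∧ a (n+1) ∧ ... ∧ a (n+k)`. -/
noncomputable def runInf (a : ℕ → (H →L[ℂ] H)) : ℕ → ℕ → (H →L[ℂ] H)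
  | 0, n => a n
  | k + 1, n => oinf (a n) (runInf a k (n + 1))

lemma exact_two (A : StarSubalgebra ℂ (H →L[ℂ] H)) (hA : IsClosed (A : Set (H →L[ℂ] H)))
    (hc : ∀ a ∈ A, ∀ b ∈ A, a * b = b * a) (hMC : MC A) (T : H →L[ℂ] H)
    (hT : T ∈ Set.centralizer (Set.centralizer (A : Set (H →L[ℂ] H)))) (hT0 : 0 ≤ T) (hT1 : T ≤ 1)
    (ξ η : H) : ∃ b, UI A b ∧ b ξ = T ξ ∧ b η = T η := by
  choose a haU ha1 ha2 using fun n : ℕ =>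
    density_UI A hA hc T hT hT0 hT1 ξ η ((1 / 2) ^ n) (by positivity)
  have hU : ∀ k n, UI A (runInf a k n) := by
    intro k
    induction k with
    | zero => exact haU
    | succ k ih => exact fun n => (haU n).oinf hA hc (ih (n + 1))
  have hshift : ∀ k n, runInf a (k + 1) n ≤ runInf a k (n + 1) := fun k n =>
    oinf_le_right _ _ (haU n).sa (hU _ _).sa
  have hstep : ∀ k n, runInf a (k + 1) n ≤ runInf a k n := by
    intro k
    induction k with
    | zero => exact fun n => oinf_le_left _ _ (haU n).sa (hU _ _).sa
    | succ k ih =>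
      intro n
      refine le_oinf _ _ _ (haU n).sa (hU _ _).sa (hc _ (haU n).1 _ (hU _ _).1)
        (hc _ (hU _ _).1 _ (haU n).1) (hc _ (hU _ _).1 _ (hU _ _).1) ?_ ?_
      · exact oinf_le_left _ _ (haU n).sa (hU _ _).sa
      · exact (hshift (k + 1) n).trans (ih (n + 1))
  have hanti : ∀ n, Antitone (fun k => runInf a k n) := fun n =>
    antitone_nat_of_succ_le fun k => hstep k n
  have hnorm : ∀ ζ, (∀ n, ‖(a n - T) ζ‖ ≤ (1 / 2) ^ n) →
      ∀ k n, ‖(runInf a k n - T) ζ‖ ≤ 2 * (1 / 2) ^ n := by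
    intro ζ hζ k
    induction k with
    | zero =>
      intro n
      have : (0 : ℝ) < (1 / 2) ^ n := by positivity
      have h2 := hζ n
      show ‖(a n - T) ζ‖ ≤ _
      linarith
    | succ k ih =>
      intro n
      have h1 := norm_oinf_sub_apply (a n) (runInf a k (n + 1)) T ζ
      have h2 := hζ n
      have h3 := ih (n + 1)
      rw [pow_succ] at h3
      show ‖(oinf (a n) (runInf a k (n + 1)) - T) ζ‖ ≤ _
      linarith
  have hinf := fun n => hMC.inf (Set.range fun k => runInf a k n) (Set.range_nonempty _) (by
    rintro _ ⟨k, rfl⟩ _ ⟨l, rfl⟩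
    exact ⟨_, ⟨max k l, rfl⟩, hanti n (le_max_left k l), hanti n (le_max_right k l)⟩) (by
    rintro _ ⟨k, rfl⟩
    exact hU k n)
  choose c hcA hcG hcN using hinf
  have hcU : ∀ n, UI A (c n) := fun n => ⟨hcA n, (hcG n).2 (by
      rintro _ ⟨k, rfl⟩
      exact (hU k n).2.1), ((hcG n).1 ⟨0, rfl⟩).trans (hU 0 n).2.2⟩
  have hcmono : Monotone c := monotone_nat_of_le_succ fun n => (hcG (n + 1)).2 (by
    rintro _ ⟨k, rfl⟩
    exact ((hcG n).1 ⟨k + 1, rfl⟩).trans (hshift k n))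
  have hcnorm : ∀ ζ, (∀ n, ‖(a n - T) ζ‖ ≤ (1 / 2) ^ n) →
      ∀ n, ‖(c n - T) ζ‖ ≤ 2 * (1 / 2) ^ n := fun ζ hζ n =>
    hcN n T ζ _ (runInf a 0 n) ⟨0, rfl⟩ (by
      rintro _ ⟨k, rfl⟩ _
      exact hnorm ζ hζ k n)
  obtain ⟨b, hbA, hbL, hbN⟩ := hMC (Set.range c) (Set.range_nonempty _) (by
    rintro _ ⟨k, rfl⟩ _ ⟨l, rfl⟩
    exact ⟨_, ⟨max k l, rfl⟩, hcmono (le_max_left k l), hcmono (le_max_right k l)⟩) (by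
    rintro _ ⟨k, rfl⟩
    exact hcU k)
  have hfin : ∀ ζ, (∀ n, ‖(a n - T) ζ‖ ≤ (1 / 2) ^ n) → b ζ = T ζ := fun ζ hζ => by
    have h1 : ∀ n : ℕ, ‖(b - T) ζ‖ ≤ 2 * (1 / 2) ^ n := fun n =>
      hbN T ζ _ (c n) ⟨n, rfl⟩ (by
        rintro _ ⟨k, rfl⟩ hle
        rcases le_total n k with h | h
        · refine (hcnorm ζ hζ k).trans ?_
          have : ((1 / 2 : ℝ)) ^ k ≤ (1 / 2) ^ n :=
            pow_le_pow_of_le_one (by norm_num) (by norm_num) h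
          linarith
        · rw [← le_antisymm hle (hcmono h)]
          exact hcnorm ζ hζ n)
    have h2 : Tendsto (fun n : ℕ => 2 * (1 / 2 : ℝ) ^ n) atTop (𝓝 (2 * 0)) :=
      (tendsto_pow_atTop_nhds_zero_of_lt_one (by norm_num) (by norm_num)).const_mul 2
    have h3 : ‖(b - T) ζ‖ ≤ 2 * 0 := ge_of_tendsto' h2 h1
    have h4 : (b - T) ζ = 0 := norm_le_zero_iff.1 (by simpa using h3)
    rw [sub_apply] at h4
    exact sub_eq_zero.1 h4
  exact ⟨b, ⟨hbA, (hcU 0).2.1.trans (hbL.1 ⟨0, rfl⟩), hbL.2 (by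
    rintro _ ⟨k, rfl⟩
    exact (hcU k).2.2)⟩, hfin ξ ha1, hfin η ha2⟩

lemma exact_below (A : StarSubalgebra ℂ (H →L[ℂ] H)) (hA : IsClosed (A : Set (H →L[ℂ] H)))
    (hc : ∀ a ∈ A, ∀ b ∈ A, a * b = b * a) (hMC : MC A) (T : H →L[ℂ] H)
    (hT : T ∈ Set.centralizer (Set.centralizer (A : Set (H →L[ℂ] H)))) (hT0 : 0 ≤ T) (hT1 : T ≤ 1)
    (ξ : H) : ∃ b, UI A b ∧ b ≤ T ∧ b ξ = T ξ := by
  have hex := fun η => exact_two A hA hc hMC T hT hT0 hT1 ξ η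
  obtain ⟨q, hqA, hqG, hqN⟩ := hMC.inf {b | UI A b ∧ b ξ = T ξ}
    (by obtain ⟨b, h1, h2, _⟩ := hex 0; exact ⟨b, h1, h2⟩)
    (by
      rintro a ⟨haU, ha⟩ b ⟨hbU, hb⟩
      refine ⟨oinf a b, ⟨haU.oinf hA hc hbU, ?_⟩, oinf_le_left _ _ haU.sa hbU.sa,
        oinf_le_right _ _ haU.sa hbU.sa⟩
      have := norm_oinf_sub_apply a b T ξ
      rw [sub_apply, sub_apply, sub_apply, ha, hb, sub_self, norm_zero, add_zero] at this
      exact sub_eq_zero.1 (norm_le_zero_iff.1 this))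
    (fun a ha => ha.1)
  obtain ⟨b₀, hb₀, hb₀', _⟩ := hex 0
  refine ⟨q, ⟨hqA, hqG.2 fun b hb => hb.1.2.1, (hqG.1 ⟨hb₀, hb₀'⟩).trans hb₀.2.2⟩, ?_, ?_⟩
  · rw [le_iff_inner]
    intro η
    obtain ⟨b, hbU, hb1, hb2⟩ := hex η
    rw [← hb2]
    exact (le_iff_inner _ _).1 (hqG.1 ⟨hbU, hb1⟩) η
  · have := hqN T ξ 0 b₀ ⟨hb₀, hb₀'⟩ (fun a ha _ => by
      rw [sub_apply, ha.2, sub_self, norm_zero])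
    rw [sub_apply] at this
    exact sub_eq_zero.1 (norm_le_zero_iff.1 this)

lemma mem_of_unit (A : StarSubalgebra ℂ (H →L[ℂ] H)) (hA : IsClosed (A : Set (H →L[ℂ] H)))
    (hc : ∀ a ∈ A, ∀ b ∈ A, a * b = b * a) (hMC : MC A) (T : H →L[ℂ] H)
    (hT : T ∈ Set.centralizer (Set.centralizer (A : Set (H →L[ℂ] H)))) (hT0 : 0 ≤ T) (hT1 : T ≤ 1) :
    T ∈ A := by
  have hex := exact_below A hA hc hMC T hT hT0 hT1
  have hTs : IsSelfAdjoint T := IsSelfAdjoint.of_nonneg hT0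
  obtain ⟨s, hsA, hsL, -⟩ := hMC {b | UI A b ∧ b ≤ T}
    (by obtain ⟨b, h1, h2, _⟩ := hex 0; exact ⟨b, h1, h2⟩)
    (by
      rintro a ⟨haU, ha⟩ b ⟨hbU, hb⟩
      have hl := oinf_le_left (-a) (-b) haU.sa.neg hbU.sa.neg
      have hr := oinf_le_right (-a) (-b) haU.sa.neg hbU.sa.neg
      have hcm : Commute (-a) (-b) := (Commute.neg_left (Commute.neg_right (hc _ haU.1 _ hbU.1)))
      have hT' := le_oinf (-T) (-a) (-b) haU.sa.neg hbU.sa.neg hcm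
        (comm_of_bicomm hc hT haU.1).symm.neg_left.neg_right
        (comm_of_bicomm hc hT hbU.1).symm.neg_left.neg_right (neg_le_neg ha) (neg_le_neg hb)
      refine ⟨-oinf (-a) (-b), ⟨⟨neg_mem (oinf_mem A hA _ _ (neg_mem haU.1) (neg_mem hbU.1)
        haU.sa.neg hbU.sa.neg), ?_, ?_⟩, neg_le.1 hT'⟩, le_neg.1 hl, le_neg.1 hr⟩
      · exact haU.2.1.trans (le_neg.1 hl)
      · exact (neg_le.1 hT').trans hT1)
    (fun a ha => ha.1)
  have hsT : s = T := by
    apply le_antisymm (hsL.2 fun b hb => hb.2)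
    rw [le_iff_inner]
    intro ξ
    obtain ⟨b, hbU, hb1, hb2⟩ := hex ξ
    rw [← hb2]
    exact (le_iff_inner _ _).1 (hsL.1 ⟨hbU, hb1⟩) ξ
  rw [← hsT]; exact hsA

lemma mem_of_sa (A : StarSubalgebra ℂ (H →L[ℂ] H)) (hA : IsClosed (A : Set (H →L[ℂ] H)))
    (hc : ∀ a ∈ A, ∀ b ∈ A, a * b = b * a) (hMC : MC A) (T : H →L[ℂ] H)
    (hT : T ∈ StarSubalgebra.centralizer ℂ
      (StarSubalgebra.centralizer ℂ (A : Set (H →L[ℂ] H)) : Set (H →L[ℂ] H)))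
    (hTC : ∀ x, x ∈ StarSubalgebra.centralizer ℂ
      (StarSubalgebra.centralizer ℂ (A : Set (H →L[ℂ] H)) : Set (H →L[ℂ] H)) ↔
      x ∈ Set.centralizer (Set.centralizer (A : Set (H →L[ℂ] H))))
    (hTs : IsSelfAdjoint T) : T ∈ A := by
  set r : ℝ := ‖T‖ + 1 with hr
  have hr0 : 0 < r := by positivity
  have h1 : T ≤ algebraMap ℝ (H →L[ℂ] H) r :=
    (IsSelfAdjoint.le_algebraMap_norm_self hTs).trans
      (algebraMap_mono _ (by simp [hr]))
  have h2 : -algebraMap ℝ (H →L[ℂ] H) r ≤ T := by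
    refine le_trans (neg_le_neg ?_) (IsSelfAdjoint.neg_algebraMap_norm_le_self hTs)
    exact algebraMap_mono _ (by simp [hr])
  rw [Algebra.algebraMap_eq_smul_one] at h1 h2
  set S : H →L[ℂ] H := (2 * r)⁻¹ • (T + r • 1) with hS
  have hSA : S ∈ A := by
    apply mem_of_unit A hA hc hMC
    · rw [← hTC]
      exact rsmul_mem _ _ _ (add_mem hT (rsmul_mem _ _ _ (one_mem _)))
    · refine smul_nonneg (by positivity) ?_
      have := sub_nonneg.2 h2
      simpa using this
    · have h3 : (1 : H →L[ℂ] H) = (2 * r)⁻¹ • (r • 1 + r • 1) := by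
        rw [← add_smul, smul_smul, ← two_mul, inv_mul_cancel₀ (by positivity), one_smul]
      rw [h3]
      exact smul_le_smul_of_nonneg_left (add_le_add_left h1 _) (by positivity)
  have : T = (2 * r) • S - r • 1 := by
    rw [hS, smul_smul, mul_inv_cancel₀ (by positivity), one_smul]; abel
  rw [this]
  exact sub_mem (rsmul_mem _ _ _ hSA) (rsmul_mem _ _ _ (one_mem _))

lemma mem_of_bicomm (A : StarSubalgebra ℂ (H →L[ℂ] H)) (hA : IsClosed (A : Set (H →L[ℂ] H)))
    (hc : ∀ a ∈ A, ∀ b ∈ A, a * b = b * a) (hMC : MC A) (T : H →L[ℂ] H)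
    (hT : T ∈ Set.centralizer (Set.centralizer (A : Set (H →L[ℂ] H)))) : T ∈ A := by
  have e1 : (StarSubalgebra.centralizer ℂ (A : Set (H →L[ℂ] H)) : Set (H →L[ℂ] H)) =
      Set.centralizer (A : Set (H →L[ℂ] H)) := by
    simp
  have hTC : ∀ x, x ∈ StarSubalgebra.centralizer ℂ
      (StarSubalgebra.centralizer ℂ (A : Set (H →L[ℂ] H)) : Set (H →L[ℂ] H)) ↔
      x ∈ Set.centralizer (Set.centralizer (A : Set (H →L[ℂ] H))) := by
    intro x
    rw [← SetLike.mem_coe, StarSubalgebra.coe_centralizer, StarMemClass.star_coe_eq,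
      Set.union_self, e1]
  have hT' := (hTC T).2 hT
  have hre := mem_of_sa A hA hc hMC (realPart T : H →L[ℂ] H) (by
    rw [realPart_apply_coe]
    exact rsmul_mem _ _ _ (add_mem hT' (star_mem hT'))) hTC (realPart T).2
  have him := mem_of_sa A hA hc hMC (imaginaryPart T : H →L[ℂ] H) (by
    rw [imaginaryPart_apply_coe]
    exact SMulMemClass.smul_mem _ (rsmul_mem _ _ _ (sub_mem hT' (star_mem hT')))) hTC
    (imaginaryPart T).2
  rw [← realPart_add_I_smul_imaginaryPart T]
  exact add_mem hre (A.smul_mem him _)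
end
end FEVN

/-- Let `M` be a von Neumann algebra acting on a complex Hilbert space `H`
and let `A ⊆ M` be a commutative unital norm-closed *-subalgebra. Suppose there exists a
faithful conditional expectation `E : M → A`. Then `A` is a von Neumann subalgebra of `M`;
in particular `A` equals its own double commutant in `B(H)`. -/
theorem faithful_expectation_vonNeumann
    {H : Type*} [NormedAddCommGroup H] [InnerProductSpace ℂ H] [CompleteSpace H]
    (M : VonNeumannAlgebra H)
    (A : StarSubalgebra ℂ (H →L[ℂ] H))
    (hAM : (A : Set (H →L[ℂ] H)) ⊆ (M : Set (H →L[ℂ] H)))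
    (hAclosed : IsClosed (A : Set (H →L[ℂ] H)))
    (hAcomm : ∀ a ∈ A, ∀ b ∈ A, a * b = b * a)
    (E : (H →L[ℂ] H) →ₗ[ℂ] (H →L[ℂ] H))
    (hErange : ∀ x ∈ M, E x ∈ A)
    (hEproj : ∀ a ∈ A, E a = a)
    (hEpos : ∀ x ∈ M, 0 ≤ x → 0 ≤ E x)
    (hEbimod : ∀ a ∈ A, ∀ b ∈ A, ∀ x ∈ M, E (a * x * b) = a * E x * b)
    (hEfaithful : ∀ x ∈ M, 0 ≤ x → E x = 0 → x = 0) :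
    Set.centralizer (Set.centralizer (A : Set (H →L[ℂ] H))) = (A : Set (H →L[ℂ] H)) := by
  exact Set.Subset.antisymm
    (fun T hT => FEVN.mem_of_bicomm A hAclosed hAcomm
      (FEVN.MC_of_expectation M A hAM E hErange hEproj hEpos hEfaithful) T hT)
    Set.subset_centralizer_centralizer
end

section
/- Let H be a complex Hilbert space and let A ⊆ B(H) be a commutative von Neumann subalgebra (a unital *-subalgebra equal to its double commutant). Suppose there exists a faithful conditional expectation E : B(H) → A. Then A is atomic: every nonzero projection e ∈ A dominates a minimal projection of A, that is, there exists a projection q ∈ A with 0 ≠ q ≤ e such that the only projections r ∈ A with r ≤ q are r = 0 and r = q. -/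
open ContinuousLinearMap InnerProductSpace in
lemma chain_inf {H : Type*} [NormedAddCommGroup H] [InnerProductSpace ℂ H] [CompleteSpace H]
    (A : StarSubalgebra ℂ (H →L[ℂ] H))
    (hvN : Set.centralizer (Set.centralizer (A : Set (H →L[ℂ] H))) = (A : Set (H →L[ℂ] H)))
    (c : Set (H →L[ℂ] H)) (hne : c.Nonempty) (hcA : ∀ f ∈ c, f ∈ A)
    (hcP : ∀ f ∈ c, IsStarProjection f) (hc : IsChain (fun f g => g ≤ f) c) (ξ : H) :
    ∃ f₀ ∈ A, IsStarProjection f₀ ∧ (∀ f ∈ c, f₀ ≤ f) ∧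
      ∀ δ : ℝ, 0 < δ → ∃ f ∈ c, ‖(f - f₀) ξ‖ < δ := by
  classical
  have : Nonempty c := hne.to_subtype
  let M : Submodule ℂ H := ⨆ f : c, LinearMap.ker (f : H →L[ℂ] H).toLinearMap
  let N : Submodule ℂ H := M.topologicalClosure
  have : CompleteSpace N := M.isClosed_topologicalClosure.completeSpace_coe
  have hdir : Directed (· ≤ ·) (fun f : c => LinearMap.ker (f : H →L[ℂ] H).toLinearMap) := by
    have key : ∀ f g : c, (g : H →L[ℂ] H) ≤ f → LinearMap.ker (f : H →L[ℂ] H).toLinearMap ≤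
        LinearMap.ker (g : H →L[ℂ] H).toLinearMap := by
      intro f g h x hx
      have h2 := ((hcP g g.2).le_iff_mul_eq_left (hcP f f.2)).1 h
      have hx' : (f : H →L[ℂ] H) x = 0 := hx
      change (g : H →L[ℂ] H) x = 0
      rw [← h2, mul_apply_eq_comp, hx', map_zero]
    intro f g
    by_cases hfg : f = g
    · exact ⟨f, le_rfl, hfg ▸ le_rfl⟩
    · rcases hc f.2 g.2 (fun h => hfg (Subtype.ext h)) with h | h
      · exact ⟨g, key f g h, le_rfl⟩
      · exact ⟨f, le_rfl, key g f h⟩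
  have hmem : ∀ x, x ∈ M ↔ ∃ f ∈ c, f x = 0 := by
    intro x
    rw [Submodule.mem_iSup_of_directed _ hdir]
    constructor
    · rintro ⟨f, hf⟩; exact ⟨f, f.2, hf⟩
    · rintro ⟨f, hf, h⟩; exact ⟨⟨f, hf⟩, h⟩
  have hP : IsStarProjection N.starProjection := isStarProjection_starProjection
  have hle : ∀ f ∈ c, 1 - N.starProjection ≤ f := by
    intro f hf
    rw [hP.one_sub.le_iff_mul_eq_left (hcP f hf)]
    ext x
    have h1 : x - f x ∈ N := by
      apply M.le_topologicalClosure
      rw [hmem]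
      refine ⟨f, hf, ?_⟩
      have := congrArg (fun T : H →L[ℂ] H => T x) (hcP f hf).isIdempotentElem.eq
      simp only [mul_apply_eq_comp] at this
      rw [map_sub, this, sub_self]
    have h2 : N.starProjection (x - f x) = x - f x := Submodule.starProjection_eq_self_iff.2 h1
    rw [map_sub] at h2
    simp only [mul_apply_eq_comp, sub_apply]
    rw [sub_eq_sub_iff_sub_eq_sub]
    rw [← neg_inj, neg_sub, neg_sub, h2]; rfl
  refine ⟨1 - N.starProjection, ?_, hP.one_sub, hle, ?_⟩
  · apply sub_mem (one_mem A)
    let S : VonNeumannAlgebra H := ⟨A, hvN⟩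
    change N.starProjection ∈ S
    rw [VonNeumannAlgebra.IsStarProjection.mem_iff hP]
    intro y hy
    rw [VonNeumannAlgebra.mem_commutant_iff] at hy
    rw [Module.End.mem_invtSubmodule, Submodule.range_starProjection]
    intro x hx
    change y x ∈ N
    refine map_mem_closure y.continuous (show x ∈ closure (M : Set H) from hx) ?_
    intro z hz
    obtain ⟨f, hf, h⟩ := (hmem z).1 hz
    refine (hmem _).2 ⟨f, hf, ?_⟩
    have := congrArg (fun T : H →L[ℂ] H => T z) (hy f (hcA f hf))
    simp only [mul_apply_eq_comp] at this
    rw [this, h, map_zero]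
  · intro δ hδ
    have hv : N.starProjection ξ ∈ closure (M : Set H) := N.starProjection_apply_mem ξ
    obtain ⟨w, hw, hd⟩ := Metric.mem_closure_iff.1 hv δ hδ
    obtain ⟨f, hf, h⟩ := (hmem w).1 hw
    refine ⟨f, hf, ?_⟩
    have h1 := (hP.one_sub.le_iff_mul_eq_right (hcP f hf)).1 (hle f hf)
    have h2 : (f - (1 - N.starProjection)) ξ = f (N.starProjection ξ - w) := by
      rw [← h1, map_sub, h]
      simp
    rw [h2]
    calc _ ≤ ‖f‖ * ‖N.starProjection ξ - w‖ := f.le_opNorm _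
      _ ≤ 1 * ‖N.starProjection ξ - w‖ := by
        gcongr; exact IsStarProjection.norm_le f (hcP f hf)
      _ < δ := by rw [one_mul, ← dist_eq_norm]; exact hd

/-- Let `A ⊆ B(H)` be a commutative von Neumann subalgebra (a unital
*-subalgebra equal to its double commutant). Suppose there exists a faithful conditional
expectation `E : B(H) → A`. Then `A` is atomic: every nonzero projection `e ∈ A` dominates
a minimal projection of `A`. -/
theorem faithful_expectation_atomic
    {H : Type*} [NormedAddCommGroup H] [InnerProductSpace ℂ H] [CompleteSpace H]
    (A : StarSubalgebra ℂ (H →L[ℂ] H))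
    (hvN : Set.centralizer (Set.centralizer (A : Set (H →L[ℂ] H))) = (A : Set (H →L[ℂ] H)))
    (hAcomm : ∀ a ∈ A, ∀ b ∈ A, a * b = b * a)
    (E : (H →L[ℂ] H) →ₗ[ℂ] (H →L[ℂ] H))
    (hErange : ∀ x : H →L[ℂ] H, E x ∈ A)
    (hEproj : ∀ a ∈ A, E a = a)
    (hEpos : ∀ x : H →L[ℂ] H, 0 ≤ x → 0 ≤ E x)
    (hEbimod : ∀ a ∈ A, ∀ b ∈ A, ∀ x : H →L[ℂ] H, E (a * x * b) = a * E x * b)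
    (hEfaithful : ∀ x : H →L[ℂ] H, 0 ≤ x → E x = 0 → x = 0) :
    ∀ e ∈ A, IsSelfAdjoint e → IsIdempotentElem e → e ≠ 0 →
      ∃ q ∈ A, IsSelfAdjoint q ∧ IsIdempotentElem q ∧ q ≠ 0 ∧ q ≤ e ∧
        (∀ r ∈ A, IsSelfAdjoint r → IsIdempotentElem r → r ≤ q → r = 0 ∨ r = q) := by
  intro e heA hesa heid he0
  by_contra hno
  push Not at hno
  have heP : IsStarProjection e := ⟨heid, hesa⟩
  have hEmono : ∀ x y : H →L[ℂ] H, x ≤ y → E x ≤ E y := by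
    intro x y h
    have := hEpos (y - x) (sub_nonneg.2 h)
    rw [map_sub] at this
    exact sub_nonneg.1 this
  obtain ⟨ξ, hξ⟩ : ∃ ξ, e ξ ≠ 0 := by
    by_contra h
    push Not at h
    exact he0 (ContinuousLinearMap.ext h)
  set p := InnerProductSpace.rankOne ℂ ξ ξ with hp
  have hconj : ∀ f : H →L[ℂ] H, IsSelfAdjoint f →
      f * p * f = InnerProductSpace.rankOne ℂ (f ξ) (f ξ) := by
    intro f hf
    ext x
    have := hf.isSymmetric ξ x
    simp only [ContinuousLinearMap.coe_coe] at this
    simp [hp, this]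
  have hrpos : ∀ v : H, 0 ≤ InnerProductSpace.rankOne ℂ v v := fun v =>
    (ContinuousLinearMap.nonneg_iff_isPositive _).2 (InnerProductSpace.isPositive_rankOne_self v)
  have hsmulmono : ∀ s t : ℝ, s ≤ t →
      (algebraMap ℝ (H →L[ℂ] H) s) ≤ algebraMap ℝ (H →L[ℂ] H) t := by
    intro s t h
    exact algebraMap_mono _ h
  set a := E p with ha
  have haA : a ∈ A := hErange p
  have hEf : ∀ f ∈ A, E (f * p * f) = f * a * f := fun f hf => hEbimod f hf f hf p
  have hsmall : ∀ ε : ℝ, ∀ f ∈ A, IsStarProjection f → ‖f ξ‖ * ‖f ξ‖ ≤ ε →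
      f * a * f ≤ algebraMap ℝ _ ε := by
    intro ε f hfA hf h
    rw [← hEf f hfA, hconj f hf.isSelfAdjoint]
    have h1 : InnerProductSpace.rankOne ℂ (f ξ) (f ξ) ≤ algebraMap ℝ (H →L[ℂ] H) ε := by
      refine (IsSelfAdjoint.of_nonneg (hrpos (f ξ))).le_algebraMap_norm_self.trans ?_
      apply hsmulmono
      simpa using h
    refine (hEmono _ _ h1).trans (le_of_eq (hEproj _ ?_))
    rw [IsScalarTower.algebraMap_apply ℝ ℂ]
    exact A.algebraMap_mem _
  have hadd : ∀ ε : ℝ, 0 ≤ ε → ∀ r ∈ A, ∀ s ∈ A, IsStarProjection r → IsStarProjection s →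
      r * s = 0 → r * a * r ≤ algebraMap ℝ _ ε → s * a * s ≤ algebraMap ℝ _ ε →
      (r + s) * a * (r + s) ≤ algebraMap ℝ _ ε := by
    intro ε hε r hrA s hsA hr hs hrs h1 h2
    have hsr : s * r = 0 := by rw [hAcomm s hsA r hrA, hrs]
    have key : ∀ t : H →L[ℂ] H, IsStarProjection t → t * a * t ≤ algebraMap ℝ _ ε →
        t * a * t ≤ ε • t := by
      intro t ht h
      have h3 := IsSelfAdjoint.conjugate_le_conjugate h ht.isSelfAdjoint
      have e1 : t * (t * a * t) * t = t * a * t := by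
        rw [← mul_assoc, ← mul_assoc, ht.isIdempotentElem.eq, mul_assoc, ht.isIdempotentElem.eq]
      have e2 : t * algebraMap ℝ (H →L[ℂ] H) ε * t = ε • t := by
        rw [Algebra.algebraMap_eq_smul_one, mul_smul_comm, mul_one, smul_mul_assoc,
          ht.isIdempotentElem.eq]
      rwa [e1, e2] at h3
    have hsum : (r + s) * a * (r + s) = r * a * r + s * a * s := by
      have e1 : r * a * s = 0 := by rw [hAcomm r hrA a haA, mul_assoc, hrs, mul_zero]
      have e2 : s * a * r = 0 := by rw [hAcomm s hsA a haA, mul_assoc, hsr, mul_zero]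
      simp only [add_mul, mul_add, e1, e2]
      abel
    rw [hsum]
    refine (add_le_add (key r hr h1) (key s hs h2)).trans ?_
    rw [← smul_add, Algebra.algebraMap_eq_smul_one]
    refine smul_le_smul_of_nonneg_left ?_ hε
    have h4 := (hr.add hs hrs).one_sub.nonneg
    exact sub_nonneg.1 h4
  have hgood : ∀ ε : ℝ, 0 < ε → e * a * e ≤ algebraMap ℝ _ ε := by
    intro ε hε
    by_contra hbad
    let B := {f : H →L[ℂ] H // f ∈ A ∧ IsStarProjection f ∧ f ≤ e ∧
      ¬ f * a * f ≤ algebraMap ℝ _ ε}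
    haveI : Nonempty B := ⟨⟨e, heA, heP, le_rfl, hbad⟩⟩
    obtain ⟨m, hm⟩ := exists_maximal_of_nonempty_chains_bounded
      (α := B) (r := fun f g => g.1 ≤ f.1) (by
        intro c hc hne
        have hne' := hne
        obtain ⟨g, hg⟩ := hne'
        obtain ⟨f₀, hf₀A, hf₀P, hf₀le, hf₀lim⟩ := chain_inf A hvN (Subtype.val '' c)
          (hne.image _) (by rintro _ ⟨f, _, rfl⟩; exact f.2.1)
          (by rintro _ ⟨f, _, rfl⟩; exact f.2.2.1)
          (by
            rintro _ ⟨f, hf, rfl⟩ _ ⟨g, hg, rfl⟩ hfg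
            exact hc hf hg (fun h => hfg (congrArg _ h))) ξ
        refine ⟨⟨f₀, hf₀A, hf₀P, (hf₀le _ ⟨g, hg, rfl⟩).trans g.2.2.2.1, ?_⟩,
          fun f hf => hf₀le _ ⟨f, hf, rfl⟩⟩
        intro hgood₀
        obtain ⟨_, ⟨f, hf, rfl⟩, hlt⟩ := hf₀lim (Real.sqrt ε) (Real.sqrt_pos.2 hε)
        have hle := hf₀le _ ⟨f, hf, rfl⟩
        have hd := (hf₀P.le_iff_sub f.2.2.1).1 hle
        have h1 := hsmall ε (f.1 - f₀) (sub_mem f.2.1 hf₀A) hd (by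
          calc _ ≤ Real.sqrt ε * Real.sqrt ε := by gcongr
            _ = ε := Real.mul_self_sqrt hε.le)
        have h2 := hadd ε hε.le f₀ hf₀A (f.1 - f₀) (sub_mem f.2.1 hf₀A) hf₀P hd (by
          rw [mul_sub, (hf₀P.le_iff_mul_eq_left f.2.2.1).1 hle, hf₀P.isIdempotentElem.eq,
            sub_self]) hgood₀ h1
        rw [add_sub_cancel] at h2
        exact f.2.2.2.2 h2) (fun h1 h2 => le_trans h2 h1)
    obtain ⟨m, hmA, hmP, hme, hmbad⟩ := m
    have hmin : ∀ r ∈ A, IsStarProjection r → r ≤ m → r ≠ m → r * a * r ≤ algebraMap ℝ _ ε := by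
      intro r hrA hr hrm hne
      by_contra hb
      exact hne (le_antisymm hrm (hm ⟨r, hrA, hr, hrm.trans hme, hb⟩ hrm))
    have hm0 : m ≠ 0 := by
      rintro rfl
      apply hmbad
      simpa using hsmulmono 0 ε hε.le
    obtain ⟨r, hrA, hrsa, hrid, hrm, hr0, hrne⟩ :=
      hno m hmA hmP.isSelfAdjoint hmP.isIdempotentElem hm0 hme
    have hr : IsStarProjection r := ⟨hrid, hrsa⟩
    have hd := (hr.le_iff_sub hmP).1 hrm
    have h1 := hmin r hrA hr hrm hrne
    have h2 := hmin (m - r) (sub_mem hmA hrA) hd (sub_le_self _ hr.nonneg)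
      (fun h => hr0 (by simpa using h))
    have h3 := hadd ε hε.le r hrA (m - r) (sub_mem hmA hrA) hr hd (by
      rw [mul_sub, (hr.le_iff_mul_eq_left hmP).1 hrm, hr.isIdempotentElem.eq, sub_self]) h1 h2
    rw [add_sub_cancel] at h3
    exact hmbad h3
  have hpos : 0 ≤ e * a * e := by
    rw [← hEf e heA, hconj e hesa]
    exact hEpos _ (hrpos _)
  have hzero : e * a * e = 0 := by
    rw [← norm_le_zero_iff]
    refine le_of_forall_pos_le_add (fun ε hε => ?_)
    rw [zero_add]
    exact (CStarAlgebra.norm_le_iff_le_algebraMap _ hε.le hpos).2 (hgood ε hε)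
  rw [← hEf e heA, hconj e hesa] at hzero
  have := hEfaithful _ (hrpos _) hzero
  rw [InnerProductSpace.rankOne_eq_zero] at this
  exact hξ (this.elim id id)
end

section
/- Let H be a complex Hilbert space and let A ⊆ B(H) be a commutative unital norm-closed *-subalgebra admitting a faithful conditional expectation E : B(H) → A. Then there exist a set X, a family (p_x)_{x∈X} of pairwise orthogonal minimal projections of A with p_x p_y = 0 for x ≠ y and ∑_{x∈X} p_x ξ = ξ (convergence as an unconditional sum in H) for every ξ ∈ H, and an orthonormal family (ξ_x)_{x∈X} in H with ξ_x in the range of p_x for each x; in particular the cardinality of X is at most the Hilbert dimension of H, and A is *-isomorphic to ℓ∞(X), the C*-algebra of bounded complex-valued functions on X. -/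
universe u

theorem gelfand_model {H : Type u} [NormedAddCommGroup H] [InnerProductSpace ℂ H] [CompleteSpace H]
    (A : StarSubalgebra ℂ (H →L[ℂ] H))
    (hAclosed : IsClosed (A : Set (H →L[ℂ] H)))
    (hAcomm : ∀ a ∈ A, ∀ b ∈ A, a * b = b * a) :
    ∃ (Ω : Type u) (_ : TopologicalSpace Ω) (_ : CompactSpace Ω) (_ : T2Space Ω)
      (Φ : C(Ω, ℂ) →⋆ₐ[ℂ] (H →L[ℂ] H)),
      (∀ f, ‖Φ f‖ = ‖f‖) ∧ (∀ f, Φ f ∈ A) ∧ (∀ a ∈ A, ∃ f, Φ f = a) := by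
  have := hAclosed
  let inst : CommCStarAlgebra A :=
    { (inferInstance : CStarAlgebra A) with
      mul_comm := fun a b => Subtype.ext (hAcomm a a.2 b b.2) }
  let g := gelfandStarTransform A
  have hiso : ∀ a : A, ‖g a‖ = ‖a‖ := fun a => 
    (AddMonoidHomClass.isometry_iff_norm (WeakDual.gelfandTransform ℂ A)).1 (gelfandTransform_isometry A) a
  refine ⟨WeakDual.characterSpace ℂ A, inferInstance, inferInstance, inferInstance,
    A.subtype.comp (g.symm : C(WeakDual.characterSpace ℂ A, ℂ) →⋆ₐ[ℂ] A), ?_, ?_, ?_⟩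
  · intro f
    have := hiso (g.symm f)
    rw [g.apply_symm_apply] at this
    exact this.symm
  · intro f
    exact (g.symm f).2
  · intro a ha
    refine ⟨g ⟨a, ha⟩, ?_⟩
    have := g.symm_apply_apply ⟨a, ha⟩
    exact congrArg Subtype.val this

open InnerProductSpace in
theorem norm_E_rankOne {H : Type u} [NormedAddCommGroup H] [InnerProductSpace ℂ H] [CompleteSpace H]
    (E : (H →L[ℂ] H) →ₗ[ℂ] (H →L[ℂ] H)) (hE1 : E 1 = 1)
    (hEpos : ∀ x : H →L[ℂ] H, 0 ≤ x → 0 ≤ E x) (w : H) :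
    ‖E (rankOne ℂ w w)‖ ≤ ‖w‖ ^ 2 := by
  have h0 : (0 : H →L[ℂ] H) ≤ rankOne ℂ w w :=
    (ContinuousLinearMap.nonneg_iff_isPositive _).2 (isPositive_rankOne_self w)
  have h1 : rankOne ℂ w w ≤ algebraMap ℝ (H →L[ℂ] H) (‖w‖ ^ 2) := by
    rw [← CStarAlgebra.norm_le_iff_le_algebraMap _ (by positivity) h0, norm_rankOne, sq]
  have h2 : 0 ≤ algebraMap ℝ (H →L[ℂ] H) (‖w‖ ^ 2) - E (rankOne ℂ w w) := by
    have := hEpos _ (sub_nonneg.2 h1)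
    rw [map_sub] at this
    convert this using 2
    have e : algebraMap ℝ (H →L[ℂ] H) (‖w‖ ^ 2) = ((‖w‖ ^ 2 : ℝ) : ℂ) • 1 := by
      rw [Algebra.algebraMap_eq_smul_one]
      ext v
      simp only [smul_apply, Complex.coe_smul]
    rw [e, map_smul, hE1]
  rw [CStarAlgebra.norm_le_iff_le_algebraMap _ (by positivity) (hEpos _ h0)]
  exact sub_nonneg.1 h2

open InnerProductSpace in
theorem mul_rankOne_mul {H : Type u} [NormedAddCommGroup H] [InnerProductSpace ℂ H] [CompleteSpace H]
    (a : H →L[ℂ] H) (ha : IsSelfAdjoint a) (v : H) :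
    a * rankOne ℂ v v * a = rankOne ℂ (a v) (a v) := by
  have hs := ContinuousLinearMap.isSelfAdjoint_iff_isSymmetric.1 ha
  ext z
  have h3 : inner ℂ (a v) z = inner ℂ v (a z) := hs v z
  simp [h3]

theorem bessel {H : Type u} [NormedAddCommGroup H] [InnerProductSpace ℂ H]
    {ι : Type*} (s : Finset ι) (w : ι → H)
    (hw : ∀ i ∈ s, ∀ j ∈ s, i ≠ j → inner ℂ (w i) (w j) = 0) :
    ‖∑ i ∈ s, w i‖ ^ 2 = ∑ i ∈ s, ‖w i‖ ^ 2 := by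
  classical
  have : ((‖∑ i ∈ s, w i‖ : ℝ) : ℂ) ^ 2 = ∑ i ∈ s, ((‖w i‖ : ℝ) : ℂ) ^ 2 := by
    have h := inner_self_eq_norm_sq_to_K (𝕜 := ℂ) (∑ i ∈ s, w i)
    refine h.symm.trans ?_
    rw [sum_inner]
    refine Finset.sum_congr rfl fun i hi => ?_
    rw [inner_sum, Finset.sum_eq_single i]
    · exact inner_self_eq_norm_sq_to_K (𝕜 := ℂ) (w i)
    · intro j hj hji
      exact hw i hi j hj hji.symm
    · exact fun h => absurd hi h
  exact_mod_cast this

/-- `p` is an atom of `A`. -/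
def IsAtomProj {H : Type u} [NormedAddCommGroup H] [InnerProductSpace ℂ H] [CompleteSpace H]
    (A : StarSubalgebra ℂ (H →L[ℂ] H)) (p : H →L[ℂ] H) : Prop :=
  p ∈ A ∧ IsSelfAdjoint p ∧ IsIdempotentElem p ∧ p ≠ 0 ∧ ∀ a ∈ A, ∃ c : ℂ, a * p = c • p

open InnerProductSpace in
theorem exists_atom {H : Type u} [NormedAddCommGroup H] [InnerProductSpace ℂ H] [CompleteSpace H]
    (A : StarSubalgebra ℂ (H →L[ℂ] H))
    (hAclosed : IsClosed (A : Set (H →L[ℂ] H)))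
    (hAcomm : ∀ a ∈ A, ∀ b ∈ A, a * b = b * a)
    (E : (H →L[ℂ] H) →ₗ[ℂ] (H →L[ℂ] H))
    (hErange : ∀ x : H →L[ℂ] H, E x ∈ A)
    (hEproj : ∀ a ∈ A, E a = a)
    (hEpos : ∀ x : H →L[ℂ] H, 0 ≤ x → 0 ≤ E x)
    (hEbimod : ∀ a ∈ A, ∀ b ∈ A, ∀ x : H →L[ℂ] H, E (a * x * b) = a * E x * b)
    (hEfaithful : ∀ x : H →L[ℂ] H, 0 ≤ x → E x = 0 → x = 0)
    (v : H) (hv : v ≠ 0) : ∃ p, IsAtomProj A p ∧ p v ≠ 0 := by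
  classical
  obtain ⟨Ω, _, _, _, Φ, hiso, hmem, hsurj⟩ := gelfand_model A hAclosed hAcomm
  have hE1 : E 1 = 1 := hEproj 1 (one_mem A)
  have hinj : ∀ f, Φ f = 0 → f = 0 := fun f hf => by
    rw [← norm_eq_zero, ← hiso, hf, norm_zero]
  obtain ⟨g, hg⟩ := hsurj _ (hErange (rankOne ℂ v v))
  have hg0 : g ≠ 0 := by
    rintro rfl
    have h0 : (0 : H →L[ℂ] H) ≤ rankOne ℂ v v :=
      (ContinuousLinearMap.nonneg_iff_isPositive _).2 (isPositive_rankOne_self v)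
    have := hEfaithful _ h0 (by rw [← hg, map_zero])
    exact rankOne_ne_zero hv hv this
  obtain ⟨ω, hω⟩ : ∃ ω, g ω ≠ 0 := by
    by_contra! h
    exact hg0 (ContinuousMap.ext h)
  -- compression estimate
  have hcomp : ∀ f : C(Ω, ℂ), IsSelfAdjoint f → 
      Φ (f * g * f) = E (rankOne ℂ (Φ f v) (Φ f v)) := by
    intro f hf
    rw [← mul_rankOne_mul _ (hf.map Φ), hEbimod _ (hmem f) _ (hmem f), ← hg, map_mul, map_mul]
  have hest : ∀ f : C(Ω, ℂ), IsSelfAdjoint f → ∀ y, f y = 1 → ‖g y‖ ≤ ‖Φ f v‖ ^ 2 := by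
    intro f hf y hy
    calc ‖g y‖ = ‖(f * g * f) y‖ := by simp [hy]
      _ ≤ ‖f * g * f‖ := ContinuousMap.norm_coe_le_norm _ y
      _ = ‖E (rankOne ℂ (Φ f v) (Φ f v))‖ := by rw [← hcomp f hf, hiso]
      _ ≤ _ := norm_E_rankOne E hE1 hEpos _
  set U : Set Ω := {y | ‖g ω‖ / 2 < ‖g y‖} with hU
  have hc : 0 < ‖g ω‖ := norm_pos_iff.2 hω
  have hωU : ω ∈ U := by simp only [hU, Set.mem_ofPred_eq]; linarith
  have hUo : IsOpen U := isOpen_lt continuous_const (by fun_prop)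
  have hcard : ∀ s : Finset Ω, (s : Set Ω) ⊆ U → (s.card : ℝ) * (‖g ω‖ / 2) ≤ ‖v‖ ^ 2 := by
    intro s hs
    obtain ⟨V, hV, hVd⟩ := s.finite_toSet.t2_separation
    have hf : ∀ y : Ω, ∃ f : C(Ω, ℝ), Set.EqOn f 0 (V y)ᶜ ∧ Set.EqOn f 1 {y} ∧
        ∀ x, f x ∈ Set.Icc (0 : ℝ) 1 := fun y =>
      exists_continuous_zero_one_of_isClosed (hV y).2.isClosed_compl isClosed_singleton
        (by simpa using (hV y).1)
    choose f hf0 hf1 hf01 using hf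
    let F : Ω → C(Ω, ℂ) := fun y => ⟨fun x => (f y x : ℂ), by fun_prop⟩
    have hFs : ∀ y, IsSelfAdjoint (F y) := fun y => by
      ext x
      simp [F]
    have hF1 : ∀ y, F y y = 1 := fun y => by simp [F, hf1 y rfl]
    have hFd : ∀ y ∈ s, ∀ z ∈ s, y ≠ z → F y * F z = 0 := by
      intro y hy z hz hyz
      ext x
      by_cases hx : x ∈ V y
      · have : x ∉ V z := fun h => Set.disjoint_left.1 (hVd hy hz hyz) hx h
        simp [F, hf0 z this]
      · simp [F, hf0 y hx]
    have horth : ∀ y ∈ s, ∀ z ∈ s, y ≠ z → inner ℂ (Φ (F y) v) (Φ (F z) v) = 0 := by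
      intro y hy z hz hyz
      have hs := ContinuousLinearMap.isSelfAdjoint_iff_isSymmetric.1 ((hFs y).map Φ)
      have h3 : inner ℂ (Φ (F y) v) (Φ (F z) v) = inner ℂ v (Φ (F y) (Φ (F z) v)) := hs v _
      have h4 : Φ (F y) (Φ (F z) v) = Φ (F y * F z) v := by rw [map_mul]; rfl
      rw [h3, h4, hFd y hy z hz hyz]
      simp
    have hS : ‖∑ y ∈ s, F y‖ ≤ 1 := by
      rw [ContinuousMap.norm_le _ zero_le_one]
      intro x
      rw [ContinuousMap.sum_apply]
      by_cases hx : ∃ y ∈ s, x ∈ V y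
      · obtain ⟨y, hy, hxy⟩ := hx
        rw [Finset.sum_eq_single y]
        · have := hf01 y x
          simp only [F, ContinuousMap.coe_mk, Complex.norm_real, Real.norm_eq_abs]
          rw [abs_of_nonneg this.1]; exact this.2
        · intro z hz hzy
          have : x ∉ V z := fun h => Set.disjoint_left.1 (hVd hy hz hzy.symm) hxy h
          simp [F, hf0 z this]
        · exact fun h => absurd hy h
      · rw [Finset.sum_eq_zero]
        · simp
        · intro y hy
          have : x ∉ V y := fun h => hx ⟨y, hy, h⟩
          simp [F, hf0 y this]
    calc (s.card : ℝ) * (‖g ω‖ / 2) = ∑ y ∈ s, ‖g ω‖ / 2 := by simp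
      _ ≤ ∑ y ∈ s, ‖Φ (F y) v‖ ^ 2 := Finset.sum_le_sum fun y hy =>
          (le_of_lt (hs hy)).trans (hest (F y) (hFs y) y (hF1 y))
      _ = ‖∑ y ∈ s, Φ (F y) v‖ ^ 2 := (bessel s _ horth).symm
      _ = ‖Φ (∑ y ∈ s, F y) v‖ ^ 2 := by rw [map_sum, sum_apply]
      _ ≤ (1 * ‖v‖) ^ 2 := by
          gcongr
          refine (ContinuousLinearMap.le_opNorm _ _).trans ?_
          gcongr
          rw [hiso]; exact hS
      _ = ‖v‖ ^ 2 := by rw [one_mul]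
  have hUfin : U.Finite := by
    by_contra hinf
    obtain ⟨n, hn⟩ := exists_nat_gt (‖v‖ ^ 2 / (‖g ω‖ / 2))
    obtain ⟨t, ht, htc⟩ := (show U.Infinite from hinf).exists_subset_card_eq n
    have := hcard t ht
    rw [div_lt_iff₀ (by positivity)] at hn
    rw [htc] at this
    linarith
  have hopen : IsOpen ({ω} : Set Ω) := by
    have h1 : IsClosed (U \ {ω}) := (hUfin.subset Set.sdiff_subset).isClosed
    have : ({ω} : Set Ω) = U \ (U \ {ω}) := by
      ext x; simp only [Set.mem_singleton_iff, Set.mem_sdiff]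
      constructor
      · rintro rfl; exact ⟨hωU, fun h => h.2 rfl⟩
      · rintro ⟨h, h'⟩; by_contra hne; exact h' ⟨h, hne⟩
    rw [this]
    exact hUo.sdiff h1
  have hclopen : IsClopen ({ω} : Set Ω) := ⟨isClosed_singleton, hopen⟩
  let q : C(Ω, ℂ) := ⟨fun x => if x = ω then 1 else 0,
    continuous_if (by
      intro a ha
      have h : frontier {x | x = ω} = ∅ := hclopen.frontier_eq
      rw [h] at ha
      exact absurd ha (Set.notMem_empty a))
      continuousOn_const continuousOn_const⟩
  have hqs : IsSelfAdjoint q := by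
    ext x
    by_cases hx : x = ω <;> simp [q, hx]
  have hqi : q * q = q := by
    ext x
    by_cases hx : x = ω <;> simp [q, hx]
  have hqm : ∀ f : C(Ω, ℂ), f * q = f ω • q := by
    intro f
    ext x
    by_cases hx : x = ω <;> simp [q, hx]
  have hq1 : q ω = 1 := by simp [q]
  refine ⟨Φ q, ⟨hmem q, hqs.map Φ, ?_, ?_, ?_⟩, ?_⟩
  · rw [IsIdempotentElem, ← map_mul, hqi]
  · intro h
    have := hinj _ h
    rw [this] at hq1
    simp at hq1
  · intro a ha
    obtain ⟨f, rfl⟩ := hsurj a ha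
    exact ⟨f ω, by rw [← map_mul, hqm, map_smul]⟩
  · intro h
    have := hest q hqs ω hq1
    rw [h] at this
    simp at this
    exact hω this

section Sums

variable {H : Type u} [NormedAddCommGroup H] [InnerProductSpace ℂ H] [CompleteSpace H]
  {X : Type u} {p : X → (H →L[ℂ] H)}

theorem inner_proj_eq_zero (hs : ∀ x, IsSelfAdjoint (p x))
    (ho : ∀ x y, x ≠ y → p x * p y = 0) {x y : X} (hxy : x ≠ y) (v w : H) :
    inner ℂ (p x v) (p y w) = 0 := by
  have hs := ContinuousLinearMap.isSelfAdjoint_iff_isSymmetric.1 (hs x)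
  have h3 : inner ℂ (p x v) (p y w) = inner ℂ v (p x (p y w)) := hs v _
  have h4 : p x (p y w) = (p x * p y) w := rfl
  rw [h3, h4, ho x y hxy]
  simp

theorem sum_proj_sq_le (hs : ∀ x, IsSelfAdjoint (p x)) (hi : ∀ x, IsIdempotentElem (p x))
    (ho : ∀ x y, x ≠ y → p x * p y = 0) (s : Finset X) (v : H) :
    ∑ x ∈ s, ‖p x v‖ ^ 2 ≤ ‖v‖ ^ 2 := by
  have h1 := bessel s (fun x => p x v)
    (fun i _ j _ hij => inner_proj_eq_zero hs ho hij v v)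
  have h2 : inner ℂ (∑ x ∈ s, p x v) v = ((∑ x ∈ s, ‖p x v‖ ^ 2 : ℝ) : ℂ) := by
    rw [sum_inner]
    push_cast
    refine Finset.sum_congr rfl fun x _ => ?_
    have hs := ContinuousLinearMap.isSelfAdjoint_iff_isSymmetric.1 (hs x)
    have h3 : inner ℂ (p x (p x v)) v = inner ℂ (p x v) (p x v) := hs (p x v) v
    have h4 : p x (p x v) = p x v := congrArg (fun T : H →L[ℂ] H => T v) (hi x)
    rw [h4] at h3
    rw [h3]
    exact inner_self_eq_norm_sq_to_K (𝕜 := ℂ) (p x v)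
  have h5 := norm_inner_le_norm (𝕜 := ℂ) (∑ x ∈ s, p x v) v
  rw [h2, Complex.norm_real, Real.norm_eq_abs, abs_of_nonneg (by positivity), ← h1] at h5
  rw [← h1]
  have h6 : ‖∑ x ∈ s, p x v‖ ≤ ‖v‖ := by
    by_contra! h
    have : 0 < ‖∑ x ∈ s, p x v‖ := lt_of_le_of_lt (norm_nonneg _) h
    nlinarith
  gcongr

theorem norm_diag_sum_le (hs : ∀ x, IsSelfAdjoint (p x)) (hi : ∀ x, IsIdempotentElem (p x))
    (ho : ∀ x y, x ≠ y → p x * p y = 0) (f : X → ℂ) (C : ℝ) (hC : 0 ≤ C)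
    (hf : ∀ x, ‖f x‖ ≤ C) (s : Finset X) (v : H) :
    ‖∑ x ∈ s, f x • p x v‖ ^ 2 ≤ C ^ 2 * ∑ x ∈ s, ‖p x v‖ ^ 2 := by
  rw [bessel s (fun x => f x • p x v), Finset.mul_sum]
  · refine Finset.sum_le_sum fun x _ => ?_
    rw [norm_smul, mul_pow]
    gcongr
    exact hf x
  · intro i _ j _ hij
    rw [inner_smul_left, inner_smul_right, inner_proj_eq_zero hs ho hij, mul_zero, mul_zero]

theorem summable_proj (hs : ∀ x, IsSelfAdjoint (p x)) (hi : ∀ x, IsIdempotentElem (p x))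
    (ho : ∀ x y, x ≠ y → p x * p y = 0) (f : X → ℂ) (C : ℝ) (hC : 0 ≤ C)
    (hf : ∀ x, ‖f x‖ ≤ C) (v : H) :
    Summable (fun x => f x • p x v) := by
  have hsum : Summable (fun x => ‖p x v‖ ^ 2) :=
    summable_of_sum_le (fun _ => by positivity) (fun s => sum_proj_sq_le hs hi ho s v)
  rw [summable_iff_vanishing_norm] at hsum ⊢
  intro ε hε
  obtain ⟨s, hs'⟩ := hsum ((ε / (C + 1)) ^ 2) (by positivity)
  refine ⟨s, fun t ht => ?_⟩
  have h1 := hs' t ht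
  rw [Real.norm_eq_abs, abs_of_nonneg (by positivity)] at h1
  have h2 := norm_diag_sum_le hs hi ho f (C + 1) (by positivity)
    (fun x => (hf x).trans (by linarith)) t v
  have h3 : ‖∑ x ∈ t, f x • p x v‖ ^ 2 < ε ^ 2 := by
    refine h2.trans_lt ?_
    calc (C + 1) ^ 2 * ∑ x ∈ t, ‖p x v‖ ^ 2 < (C + 1) ^ 2 * (ε / (C + 1)) ^ 2 := by gcongr
      _ = ε ^ 2 := by field_simp
  exact lt_of_pow_lt_pow_left₀ 2 hε.le h3

theorem exists_diag (hs : ∀ x, IsSelfAdjoint (p x)) (hi : ∀ x, IsIdempotentElem (p x))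
    (ho : ∀ x y, x ≠ y → p x * p y = 0) (f : X → ℂ) (C : ℝ) (hC : 0 ≤ C)
    (hf : ∀ x, ‖f x‖ ≤ C) :
    ∃ T : H →L[ℂ] H, (∀ v, HasSum (fun x => f x • p x v) (T v)) ∧ ∀ x, p x * T = f x • p x := by
  have hS := fun v => (summable_proj hs hi ho f C hC hf v).hasSum
  let L : H →ₗ[ℂ] H :=
    { toFun := fun v => ∑' x, f x • p x v
      map_add' := fun v w => by
        refine HasSum.tsum_eq ?_
        have := (hS v).add (hS w)
        simpa only [map_add, smul_add] using this
      map_smul' := fun c v => by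
        refine HasSum.tsum_eq ?_
        have := (hS v).const_smul c
        simpa only [map_smul, RingHom.id_apply, smul_comm c] using this }
  have hL : ∀ v, ‖L v‖ ≤ C * ‖v‖ := by
    intro v
    refine le_of_tendsto (hS v).norm (Filter.Eventually.of_forall fun s => ?_)
    refine le_of_sq_le_sq ?_ (by positivity)
    refine (norm_diag_sum_le hs hi ho f C hC hf s v).trans ?_
    rw [mul_pow]
    gcongr
    exact sum_proj_sq_le hs hi ho s v
  refine ⟨L.mkContinuous C hL, hS, fun x => ?_⟩
  ext v
  have h1 := (hS v).mapL (p x)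
  have h2 : HasSum (fun y => p x (f y • p y v)) (f x • p x v) := by
    have e : f x • p x v = p x (f x • p x v) := by
      rw [map_smul]
      have h4 : p x (p x v) = p x v := congrArg (fun T : H →L[ℂ] H => T v) (hi x)
      rw [h4]
    rw [e]
    refine hasSum_single x fun y hy => ?_
    rw [map_smul]
    have h4 : p x (p y v) = 0 := congrArg (fun T : H →L[ℂ] H => T v) (ho x y hy.symm)
    rw [h4, smul_zero]
  exact h1.unique h2

end Sums

/-- Let `A ⊆ B(H)` be a commutative unital norm-closed *-subalgebra admitting
a faithful conditional expectation `E : B(H) → A`. Then there exist a set `X`, a family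
`(p_x)_{x ∈ X}` of pairwise orthogonal minimal projections of `A` summing to the identity
(as an unconditional sum applied to every vector), and an orthonormal family `(ξ_x)` with
`ξ_x` in the range of `p_x`; in particular `|X| ≤ dim H` and `A ≅ ℓ∞(X)`. -/
theorem faithful_expectation_ellInfty
    {H : Type u} [NormedAddCommGroup H] [InnerProductSpace ℂ H] [CompleteSpace H]
    (A : StarSubalgebra ℂ (H →L[ℂ] H))
    (hAclosed : IsClosed (A : Set (H →L[ℂ] H)))
    (hAcomm : ∀ a ∈ A, ∀ b ∈ A, a * b = b * a)
    (E : (H →L[ℂ] H) →ₗ[ℂ] (H →L[ℂ] H))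
    (hErange : ∀ x : H →L[ℂ] H, E x ∈ A)
    (hEproj : ∀ a ∈ A, E a = a)
    (hEpos : ∀ x : H →L[ℂ] H, 0 ≤ x → 0 ≤ E x)
    (hEbimod : ∀ a ∈ A, ∀ b ∈ A, ∀ x : H →L[ℂ] H, E (a * x * b) = a * E x * b)
    (hEfaithful : ∀ x : H →L[ℂ] H, 0 ≤ x → E x = 0 → x = 0) :
    ∃ (X : Type u) (p : X → (H →L[ℂ] H)) (ξ : X → H),
      (∀ x, p x ∈ A) ∧
      (∀ x, IsSelfAdjoint (p x)) ∧
      (∀ x, IsIdempotentElem (p x)) ∧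
      (∀ x, p x ≠ 0) ∧
      (∀ x, ∀ r ∈ A, IsSelfAdjoint r → IsIdempotentElem r → r ≤ p x → r = 0 ∨ r = p x) ∧
      (∀ x y, x ≠ y → p x * p y = 0) ∧
      (∀ v : H, HasSum (fun x => p x v) v) ∧
      Orthonormal ℂ ξ ∧
      (∀ x, p x (ξ x) = ξ x) ∧
      Cardinal.mk X ≤ Module.rank ℂ H ∧
      Nonempty (A ≃⋆ₐ[ℂ] lp (fun _ : X => ℂ) ⊤) := by
  classical
  have hat := exists_atom A hAclosed hAcomm E hErange hEproj hEpos hEbimod hEfaithful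
  let X : Type u := {q : H →L[ℂ] H // IsAtomProj A q}
  let p : X → (H →L[ℂ] H) := fun x => x.1
  have hpA : ∀ x, p x ∈ A := fun x => x.2.1
  have hps : ∀ x, IsSelfAdjoint (p x) := fun x => x.2.2.1
  have hpi : ∀ x, IsIdempotentElem (p x) := fun x => x.2.2.2.1
  have hp0 : ∀ x, p x ≠ 0 := fun x => x.2.2.2.2.1
  have hpc : ∀ x, ∀ a ∈ A, ∃ c : ℂ, a * p x = c • p x := fun x => x.2.2.2.2.2
  have hidem : ∀ x (r : H →L[ℂ] H) (c : ℂ), IsIdempotentElem r → r = c • p x →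
      r = 0 ∨ r = p x := by
    intro x r c hr hc
    have h1 : (c * c) • p x = c • p x := by
      have : r * r = r := hr
      rw [hc, smul_mul_smul_comm, (hpi x).eq] at this
      exact this
    have h2 : c * c = c := smul_left_injective ℂ (hp0 x) h1
    rcases (IsIdempotentElem.iff_eq_zero_or_one (p := c)).1 h2 with h | h
    · left; rw [hc, h, zero_smul]
    · right; rw [hc, h, one_smul]
  have hmin : ∀ x, ∀ r ∈ A, IsSelfAdjoint r → IsIdempotentElem r → r ≤ p x →
      r = 0 ∨ r = p x := by
    intro x r hr hrs hri hle
    obtain ⟨c, hc⟩ := hpc x r hr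
    have hmul : r * p x = r :=
      (IsStarProjection.le_iff_mul_eq_left ⟨hri, hrs⟩ ⟨hpi x, hps x⟩).1 hle
    exact hidem x r c hri (hmul.symm.trans hc)
  have hpo : ∀ x y, x ≠ y → p x * p y = 0 := by
    intro x y hxy
    have hcomm := hAcomm _ (hpA x) _ (hpA y)
    have hid : IsIdempotentElem (p x * p y) := by
      have h : p x * p y * (p x * p y) = (p x * p x) * (p y * p y) := by
        rw [mul_assoc, ← mul_assoc (p y), ← hcomm]
        simp only [mul_assoc]
      rw [IsIdempotentElem, h, (hpi x).eq, (hpi y).eq]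
    obtain ⟨c, hc⟩ := hpc y _ (hpA x)
    obtain ⟨d, hd⟩ := hpc x _ (hpA y)
    rcases hidem y _ c hid hc with h | h
    · exact h
    · rcases hidem x _ d hid (hcomm.trans hd) with h' | h'
      · exact h'
      · exact absurd (Subtype.ext (h'.symm.trans h)) hxy
  have hzero : ∀ v, (∀ x, p x v = 0) → v = 0 := by
    intro v hv
    by_contra hne
    obtain ⟨q, hq, hqv⟩ := hat v hne
    exact hqv (hv ⟨q, hq⟩)
  have hpp : ∀ x v, p x (p x v) = p x v := fun x v =>
    congrArg (fun T : H →L[ℂ] H => T v) (hpi x)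
  have hsum : ∀ v : H, HasSum (fun x => p x v) v := by
    obtain ⟨T, hT, hT'⟩ := exists_diag hps hpi hpo (fun _ => 1) 1 zero_le_one (by simp)
    intro v
    have h1 : T v = v := by
      rw [← sub_eq_zero]
      refine hzero _ fun x => ?_
      have : p x (T v) = p x v := by
        have := congrArg (fun T : H →L[ℂ] H => T v) (hT' x)
        simpa using this
      rw [map_sub, this, sub_self]
    have := hT v
    simpa [h1] using this
  have hξ : ∀ x, ∃ w : H, ‖w‖ = 1 ∧ p x w = w := by
    intro x
    obtain ⟨v, hv⟩ : ∃ v, p x v ≠ 0 := by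
      by_contra! h
      exact hp0 x (ContinuousLinearMap.ext h)
    refine ⟨((‖p x v‖ : ℂ)⁻¹) • p x v, ?_, ?_⟩
    · rw [norm_smul, norm_inv, Complex.norm_real, norm_norm,
        inv_mul_cancel₀ (norm_ne_zero_iff.2 hv)]
    · rw [map_smul, hpp]
  choose ξ hξ1 hξp using hξ
  have hON : Orthonormal ℂ ξ := by
    refine ⟨hξ1, fun x y hxy => ?_⟩
    have := inner_proj_eq_zero hps hpo hxy (ξ x) (ξ y)
    rwa [hξp, hξp] at this
  refine ⟨X, p, ξ, hpA, hps, hpi, hp0, hmin, hpo, hsum, hON, hξp,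
    hON.linearIndependent.cardinal_le_rank, ?_⟩
  choose c hc using hpc
  let k : A → X → ℂ := fun a x => c x a.1 a.2
  have hk : ∀ (a : A) x, a.1 * p x = k a x • p x := fun a x => hc x a.1 a.2
  have huniq : ∀ (a : A) x (z : ℂ), a.1 * p x = z • p x → k a x = z := fun a x z hz =>
    smul_left_injective ℂ (hp0 x) ((hk a x).symm.trans hz)
  have hbd : ∀ (a : A) x, ‖k a x‖ ≤ ‖a.1‖ := by
    intro a x
    have h1 : ‖a.1 * p x‖ ≤ ‖a.1‖ * ‖p x‖ := norm_mul_le _ _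
    rw [hk, norm_smul] at h1
    exact le_of_mul_le_mul_right h1 (norm_pos_iff.2 (hp0 x))
  have hmem : ∀ a : A, Memℓp (fun x => k a x) ⊤ := fun a =>
    memℓp_infty ⟨‖a.1‖, by rintro _ ⟨x, rfl⟩; exact hbd a x⟩
  let F : A → lp (fun _ : X => ℂ) ⊤ := fun a => ⟨fun x => k a x, hmem a⟩
  have hFinj : Function.Injective F := by
    intro a b hab
    have hab' : ∀ x, k a x = k b x := fun x =>
      congrArg (fun f : lp (fun _ : X => ℂ) ⊤ => (f : X → ℂ) x) hab
    apply Subtype.ext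
    ext v
    rw [← sub_eq_zero]
    refine hzero _ fun x => ?_
    have h1 : p x * a.1 = p x * b.1 := by
      rw [hAcomm _ (hpA x) _ a.2, hAcomm _ (hpA x) _ b.2, hk, hk, hab']
    have h2 : p x (a.1 v) = p x (b.1 v) := congrArg (fun T : H →L[ℂ] H => T v) h1
    rw [map_sub, h2, sub_self]
  have hFsurj : Function.Surjective F := by
    intro f
    obtain ⟨T, -, hT⟩ := exists_diag hps hpi hpo (f : X → ℂ) ‖f‖ (norm_nonneg _)
      (fun x => lp.norm_apply_le_norm (by simp) f x)
    refine ⟨⟨E T, hErange T⟩, ?_⟩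
    apply lp.ext
    funext x
    refine huniq _ x _ ?_
    have h1 := hEbimod _ (hpA x) _ (one_mem A) T
    rw [mul_one, mul_one, hT, map_smul, hEproj _ (hpA x)] at h1
    exact (hAcomm _ (hErange T) _ (hpA x)).trans h1.symm
  exact ⟨{ Equiv.ofBijective F ⟨hFinj, hFsurj⟩ with
    map_mul' := fun a b => by
      apply lp.ext
      funext x
      refine huniq _ x _ ?_
      change (a.1 * b.1) * p x = (k a x * k b x) • p x
      rw [mul_assoc, hk, mul_smul_comm, hk, smul_smul, mul_comm]
    map_add' := fun a b => by
      apply lp.ext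
      funext x
      refine huniq _ x _ ?_
      change (a.1 + b.1) * p x = (k a x + k b x) • p x
      rw [add_mul, hk, hk, add_smul]
    map_star' := fun a => by
      apply lp.ext
      funext x
      refine huniq _ x _ ?_
      change star a.1 * p x = (star (k a x)) • p x
      have h := congrArg star (hk a x)
      rw [star_mul, star_smul, (hps x).star_eq] at h
      rw [← h]
      exact hAcomm _ (star_mem a.2) _ (hpA x)
    map_smul' := fun r a => by
      apply lp.ext
      funext x
      refine huniq _ x _ ?_
      change (r • a.1) * p x = (r • k a x) • p x
      rw [smul_mul_assoc, hk, smul_smul, smul_eq_mul] }⟩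
end

section
/- Let H be a complex Hilbert space, X an infinite set, and (p_x)_{x∈X} a family of nonzero orthogonal projections in B(H) with p_x p_y = 0 for x ≠ y and ∑_{x∈X} p_x ξ = ξ (as an unconditional sum) for every ξ ∈ H. Then there exists an operator V ∈ B(H) with ‖T − V‖ ≥ 1 for every k ∈ ℕ and every T ∈ S_k; in particular, the norm closure of ⋃_{k≥1} S_k is a proper subset of B(H). -/
/-- For `k : ℕ`, `blockSparse p k` is the set of operators `T ∈ B(H)` such that for every
`x ∈ X` the set `{y : X | p y * T * p x ≠ 0}` has at most `k` elements, and for every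
`y ∈ X` the set `{x : X | p y * T * p x ≠ 0}` has at most `k` elements. -/
def blockSparse {H : Type*} [NormedAddCommGroup H] [InnerProductSpace ℂ H]
    {X : Type*} (p : X → (H →L[ℂ] H)) (k : ℕ) : Set (H →L[ℂ] H) :=
  {T | (∀ x : X, Cardinal.mk {y : X | p y * T * p x ≠ 0} ≤ k) ∧
       (∀ y : X, Cardinal.mk {x : X | p y * T * p x ≠ 0} ≤ k)}


/-- Two orthonormal sequences are intertwined by a bounded operator. -/
theorem exists_map_orthonormal {H : Type*} [NormedAddCommGroup H] [InnerProductSpace ℂ H]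
    [CompleteSpace H] {a b : ℕ → H} (ha : Orthonormal ℂ a) (hb : Orthonormal ℂ b) :
    ∃ V : H →L[ℂ] H, ∀ n, V (a n) = b n := by
  let A := ha.orthogonalFamily.linearIsometry
  let B := hb.orthogonalFamily.linearIsometry
  refine ⟨B.toContinuousLinearMap ∘L ContinuousLinearMap.adjoint A.toContinuousLinearMap, ?_⟩
  intro n
  have hA : A (lp.single 2 n (1 : ℂ)) = a n := by
    refine (ha.orthogonalFamily.linearIsometry_apply_single (i := n) (1 : ℂ)).trans ?_
    simp
  have hB : B (lp.single 2 n (1 : ℂ)) = b n := by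
    refine (hb.orthogonalFamily.linearIsometry_apply_single (i := n) (1 : ℂ)).trans ?_
    simp
  have h1 : ContinuousLinearMap.adjoint A.toContinuousLinearMap ∘L A.toContinuousLinearMap = 1 :=
    (ContinuousLinearMap.norm_map_iff_adjoint_comp_self _).1 (fun x => A.norm_map x)
  have h2 := congrArg (fun L => L (lp.single 2 n (1 : ℂ))) h1
  simp only [ContinuousLinearMap.comp_apply, LinearIsometry.coe_toContinuousLinearMap, hA,
    one_apply_eq_self] at h2
  simp only [ContinuousLinearMap.comp_apply, h2, LinearIsometry.coe_toContinuousLinearMap, hB]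

theorem inner_avg {H : Type*} [NormedAddCommGroup H] [InnerProductSpace ℂ H]
    {e : ℕ × ℕ → H} (he : Orthonormal ℂ e) (n j m : ℕ) :
    inner ℂ (e (n, j)) (((Real.sqrt (m + 1))⁻¹ : ℂ) • ∑ i ∈ Finset.range (m + 1), e (m, i)) =
      if n = m ∧ j < m + 1 then ((Real.sqrt (m + 1))⁻¹ : ℂ) else 0 := by
  rw [inner_smul_right, inner_sum]
  simp only [orthonormal_iff_ite.1 he, Prod.mk.injEq]
  by_cases h : n = m <;> simp [h]

theorem orthonormal_avg {H : Type*} [NormedAddCommGroup H] [InnerProductSpace ℂ H]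
    {e : ℕ × ℕ → H} (he : Orthonormal ℂ e) :
    Orthonormal ℂ (fun m : ℕ =>
      ((Real.sqrt (m + 1))⁻¹ : ℂ) • ∑ i ∈ Finset.range (m + 1), e (m, i)) := by
  rw [orthonormal_iff_ite]
  intro n m
  rw [inner_smul_left, sum_inner]
  simp only [inner_avg he]
  by_cases h : n = m
  · subst h
    rw [Finset.sum_congr rfl (fun i hi => if_pos ⟨rfl, Finset.mem_range.1 hi⟩)]
    have h0 : (0 : ℝ) ≤ (n : ℝ) + 1 := by positivity
    have h1 : ((Real.sqrt (n + 1) : ℝ) : ℂ) * (Real.sqrt (n + 1) : ℝ) = (n : ℂ) + 1 := by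
      rw [← Complex.ofReal_mul, Real.mul_self_sqrt h0]; push_cast; rfl
    have h2 : ((Real.sqrt (n + 1) : ℝ) : ℂ) ≠ 0 := by
      rw [Complex.ofReal_ne_zero]; positivity
    simp only [map_inv₀, Complex.conj_ofReal, Finset.sum_const, Finset.card_range, nsmul_eq_mul,
      if_true]
    push_cast
    rw [← h1]
    field_simp
  · simp [h]

/-- if `X` is infinite and the projections `p_x` are nonzero, pairwise
orthogonal and complete, then there exists `V ∈ B(H)` with `‖T - V‖ ≥ 1` for every `k` and
every `T ∈ S_k`; in particular the norm closure of `⋃_{k ≥ 1} S_k` is a proper subset of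
`B(H)`. -/
theorem exists_operator_far_from_blockSparse
    {H : Type*} [NormedAddCommGroup H] [InnerProductSpace ℂ H] [CompleteSpace H]
    {X : Type*} [Infinite X] (p : X → (H →L[ℂ] H))
    (hnz : ∀ x, p x ≠ 0)
    (hsa : ∀ x, IsSelfAdjoint (p x))
    (hidem : ∀ x, IsIdempotentElem (p x))
    (horth : ∀ x y, x ≠ y → p x * p y = 0)
    (hcomplete : ∀ ξ : H, HasSum (fun x => p x ξ) ξ) :
    ∃ V : H →L[ℂ] H,
      (∀ k : ℕ, ∀ T ∈ blockSparse p k, 1 ≤ ‖T - V‖) ∧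
      closure (⋃ k ∈ Set.Ici 1, blockSparse p k) ≠ (Set.univ : Set (H →L[ℂ] H)) := by
  classical
  -- unit vectors
  have hu : ∀ x, ∃ u : H, ‖u‖ = 1 ∧ p x u = u := by
    intro x
    obtain ⟨ξ, hξ⟩ : ∃ ξ, p x ξ ≠ 0 := by
      by_contra! h
      exact hnz x (ContinuousLinearMap.ext h)
    refine ⟨((‖p x ξ‖ : ℂ)⁻¹) • p x ξ, norm_smul_inv_norm hξ, ?_⟩
    rw [map_smul]
    congr 1
    exact congrArg (fun L => L ξ) (hidem x)
  choose u hu1 hu2 using hu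
  have hin : ∀ x (a b : H), inner ℂ (p x a) b = inner ℂ a (p x b) := by
    intro x a b
    have := ContinuousLinearMap.adjoint_inner_left (p x) b a
    rwa [← ContinuousLinearMap.star_eq_adjoint, (hsa x).star_eq] at this
  have hou : Orthonormal ℂ u := by
    refine ⟨hu1, fun x y hxy => ?_⟩
    change inner ℂ (u x) (u y) = 0
    rw [← hu2 x, hin, ← hu2 y]
    have : p x (p y (u y)) = 0 := congrArg (fun L => L (u y)) (horth x y hxy)
    rw [this, inner_zero_right]
  let f : ℕ × ℕ → X := fun q => Infinite.natEmbedding X (Nat.pairEquiv q)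
  have hf : Function.Injective f :=
    (Infinite.natEmbedding X).injective.comp Nat.pairEquiv.injective
  have he : Orthonormal ℂ (fun q => u (f q)) := hou.comp f hf
  have he0 : Orthonormal ℂ (fun n : ℕ => u (f (n, 0))) :=
    he.comp (fun n : ℕ => (n, 0)) (fun a b h => (Prod.mk.inj h).1)
  obtain ⟨V, hV⟩ := exists_map_orthonormal he0 (orthonormal_avg he)
  have key : ∀ k : ℕ, ∀ T ∈ blockSparse p k, 1 ≤ ‖T - V‖ := by
    intro k T hT
    have hmain : ∀ n : ℕ, ((n : ℝ) + 1) - k ≤ (n + 1) * ‖T - V‖ ^ 2 := by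
      intro n
      have hc := hT.1 (f (n, 0))
      have hinj : Function.Injective (fun j : ℕ => f (n, j)) :=
        hf.comp (fun a b h => (Prod.mk.inj h).2)
      let B := (Finset.range (n + 1)).filter (fun j => p (f (n, j)) * T * p (f (n, 0)) ≠ 0)
      let G := (Finset.range (n + 1)).filter (fun j => ¬ p (f (n, j)) * T * p (f (n, 0)) ≠ 0)
      have hBG : B.card + G.card = n + 1 := by
        have := Finset.card_filter_add_card_filter_not (s := Finset.range (n + 1))
          (fun j => p (f (n, j)) * T * p (f (n, 0)) ≠ 0)
        rw [Finset.card_range] at this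
        exact this
      have hB : B.card ≤ k := by
        have h1 : Cardinal.mk (B.image (fun j => f (n, j)) : Set X) ≤ k := by
          refine (Cardinal.mk_le_mk_of_subset ?_).trans hc
          intro y hy
          simp only [Finset.coe_image, Set.mem_image, Finset.mem_coe] at hy
          obtain ⟨j, hj, rfl⟩ := hy
          exact (Finset.mem_filter.1 hj).2
        erw [Cardinal.mk_coe_finset] at h1
        rw [Finset.card_image_of_injective _ hinj] at h1
        exact_mod_cast h1
      have hon : Orthonormal ℂ (fun j : ℕ => u (f (n, j))) :=
        he.comp (fun j : ℕ => (n, j)) (fun a b h => (Prod.mk.inj h).2)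
      have hbes := hon.sum_inner_products_le ((T - V) (u (f (n, 0)))) (s := G)
      have hterm : ∀ j ∈ G, ‖inner ℂ (u (f (n, j))) ((T - V) (u (f (n, 0))))‖ ^ 2
          = ((n : ℝ) + 1)⁻¹ := by
        intro j hj
        obtain ⟨hj1, hj2⟩ := Finset.mem_filter.1 hj
        rw [not_not] at hj2
        have hz : inner ℂ (u (f (n, j))) (T (u (f (n, 0)))) = 0 := by
          have : p (f (n, j)) (T (p (f (n, 0)) (u (f (n, 0))))) = 0 :=
            congrArg (fun L => L (u (f (n, 0)))) hj2
          rw [hu2] at this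
          rw [← hu2 (f (n, j)), hin, this, inner_zero_right]
        have h3 := inner_avg he n j n
        rw [if_pos ⟨rfl, Finset.mem_range.1 hj1⟩] at h3
        rw [sub_apply, inner_sub_right, hz, hV n, h3, zero_sub, norm_neg,
          norm_inv, Complex.norm_real, inv_pow, Real.norm_eq_abs, sq_abs,
          Real.sq_sqrt (by positivity)]
      rw [Finset.sum_congr rfl hterm, Finset.sum_const, nsmul_eq_mul] at hbes
      have hle : ‖(T - V) (u (f (n, 0)))‖ ≤ ‖T - V‖ := by
        have := (T - V).le_opNorm (u (f (n, 0)))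
        rwa [hu1, mul_one] at this
      have hle2 : (G.card : ℝ) * ((n : ℝ) + 1)⁻¹ ≤ ‖T - V‖ ^ 2 :=
        hbes.trans (pow_le_pow_left₀ (norm_nonneg _) hle 2)
      rw [← div_eq_mul_inv, div_le_iff₀ (by positivity)] at hle2
      have h5 : (B.card : ℝ) + G.card = n + 1 := by exact_mod_cast hBG
      have h6 : (B.card : ℝ) ≤ k := by exact_mod_cast hB
      linarith
    by_contra! hlt
    have hpos : 0 < 1 - ‖T - V‖ ^ 2 := by nlinarith [norm_nonneg (T - V)]
    obtain ⟨n, hn⟩ := exists_nat_gt ((k : ℝ) / (1 - ‖T - V‖ ^ 2))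
    rw [div_lt_iff₀ hpos] at hn
    nlinarith [hmain n]
  refine ⟨V, key, fun hcl => ?_⟩
  have hVm : V ∈ closure (⋃ k ∈ Set.Ici 1, blockSparse p k) := by rw [hcl]; trivial
  obtain ⟨T, hT, hd⟩ := Metric.mem_closure_iff.1 hVm 1 one_pos
  simp only [Set.mem_iUnion] at hT
  obtain ⟨k, -, hT⟩ := hT
  have := key k T hT
  rw [dist_comm, dist_eq_norm] at hd
  linarith
end

section
/- Let H be a complex Hilbert space and let A ⊆ B(H) be a commutative von Neumann subalgebra (a unital *-subalgebra equal to its double commutant) that is nonzero and diffuse, i.e., A contains no minimal projection. Then there is no faithful conditional expectation E : B(H) → A. -/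
open ContinuousLinearMap in
/-- Range projection of a self-adjoint element of a von Neumann algebra. -/
lemma range_proj_mem {H : Type*} [NormedAddCommGroup H] [InnerProductSpace ℂ H] [CompleteSpace H]
    (A : StarSubalgebra ℂ (H →L[ℂ] H))
    (hvN : Set.centralizer (Set.centralizer (A : Set (H →L[ℂ] H))) = (A : Set (H →L[ℂ] H)))
    (b : H →L[ℂ] H)
    (hb : ∀ T ∈ Set.centralizer (A : Set (H →L[ℂ] H)), b * T = T * b) :
    b.range.topologicalClosure.starProjection ∈ A := by
  set e := b.range.topologicalClosure.starProjection with he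
  have hse : star e = e := (isSelfAdjoint_starProjection _).star_eq
  have key : ∀ T ∈ Set.centralizer (A : Set (H →L[ℂ] H)), e * (T * e) = T * e := by
    intro T hT
    ext x
    have hx : e x ∈ b.range.topologicalClosure := Submodule.starProjection_apply_mem _ x
    have : ∀ y ∈ b.range.topologicalClosure, T y ∈ b.range.topologicalClosure := by
      intro y hy
      have h := map_mem_closure T.continuous (s := (b.range : Set H)) (t := (b.range : Set H))
        (x := y) hy
      refine h ?_
      rintro _ ⟨z, rfl⟩
      refine ⟨T z, ?_⟩
      exact DFunLike.congr_fun (hb T hT) z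
    exact Submodule.starProjection_eq_self_iff.mpr (this _ hx)
  have hst : ∀ T ∈ Set.centralizer (A : Set (H →L[ℂ] H)),
      star T ∈ Set.centralizer (A : Set (H →L[ℂ] H)) := by
    intro T hT a ha
    have := congrArg star (hT (star a) (star_mem ha))
    simpa using this.symm
  have : e ∈ Set.centralizer (Set.centralizer (A : Set (H →L[ℂ] H))) := by
    intro T hT
    have h1 := key T hT
    have h2 := congrArg star (key _ (hst T hT))
    simp only [star_mul, star_star, hse] at h2
    rw [← h1, ← mul_assoc, h2]
  rw [hvN] at this
  exact this

/-- Halving in a diffuse algebra. -/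
lemma halving {H : Type*} [NormedAddCommGroup H] [InnerProductSpace ℂ H] [CompleteSpace H]
    (A : StarSubalgebra ℂ (H →L[ℂ] H))
    (hdiffuse : ¬ ∃ q ∈ A, IsSelfAdjoint q ∧ IsIdempotentElem q ∧ q ≠ 0 ∧
      (∀ r ∈ A, IsSelfAdjoint r → IsIdempotentElem r → r ≤ q → r = 0 ∨ r = q))
    (e : H →L[ℂ] H) (heA : e ∈ A) (he : IsStarProjection e) (he0 : e ≠ 0) (ξ : H) (n : ℕ) :
    ∃ f ∈ A, IsStarProjection f ∧ f ≠ 0 ∧ e * f = f ∧ ‖f ξ‖ ^ 2 ≤ (1 / 2) ^ n * ‖e ξ‖ ^ 2 := by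
  induction n with
  | zero => exact ⟨e, heA, he, he0, he.isIdempotentElem, by simp⟩
  | succ n ih =>
    obtain ⟨f, hfA, hf, hf0, hef, hle⟩ := ih
    have : ∃ r ∈ A, IsStarProjection r ∧ r ≤ f ∧ r ≠ 0 ∧ r ≠ f := by
      by_contra hcon
      refine hdiffuse ⟨f, hfA, hf.isSelfAdjoint, hf.isIdempotentElem, hf0, ?_⟩
      intro r hr h1 h2 h3
      by_contra h4
      push Not at h4
      exact hcon ⟨r, hr, ⟨h2, h1⟩, h3, h4.1, h4.2⟩
    obtain ⟨r, hrA, hr, hrf, hr0, hrne⟩ := this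
    have hs : IsStarProjection (f - r) := (hr.le_iff_sub hf).mp hrf
    have hfr : f * r = r := by
      first | exact (hr.le_iff_mul_eq_right hf).mp hrf | exact (hr.le_iff_mul_eq_left hf).mp hrf
    have hrf' : r * f = r := by
      first | exact (hr.le_iff_mul_eq_left hf).mp hrf | exact (hr.le_iff_mul_eq_right hf).mp hrf
    have horth : r * (f - r) = 0 := by
      rw [mul_sub, hrf', hr.isIdempotentElem.eq, sub_self]
    have hpy : ‖f ξ‖ ^ 2 = ‖r ξ‖ ^ 2 + ‖(f - r) ξ‖ ^ 2 := by
      have h0 : inner ℂ (r ξ) ((f - r) ξ) = 0 := by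
        have hsym := hr.isSelfAdjoint.isSymmetric ξ ((f - r) ξ)
        have hz : r ((f - r) ξ) = 0 := DFunLike.congr_fun horth ξ
        rw [ContinuousLinearMap.coe_coe] at hsym
        rw [hsym, hz, inner_zero_right]
      have := norm_add_sq_eq_norm_sq_add_norm_sq_of_inner_eq_zero _ _ h0
      simp only [← sq] at this
      rw [← this]
      simp
    rcases le_total (‖r ξ‖ ^ 2) (‖(f - r) ξ‖ ^ 2) with h | h
    · refine ⟨r, hrA, hr, hr0, ?_, ?_⟩
      · rw [← hfr, ← mul_assoc, hef]
      · rw [pow_succ (1 / 2 : ℝ) n]; linarith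
    · refine ⟨f - r, sub_mem hfA hrA, hs, sub_ne_zero.mpr hrne.symm, ?_, ?_⟩
      · rw [mul_sub, hef, ← hfr, ← mul_assoc, hef]
      · rw [pow_succ (1 / 2 : ℝ) n]; linarith

/-- Let `A ⊆ B(H)` be a commutative von Neumann subalgebra (a unital
*-subalgebra equal to its double commutant) that is nonzero and diffuse (contains no
minimal projection). Then there is no faithful conditional expectation
`E : B(H) → A`. -/
theorem diffuse_no_faithful_expectation
    {H : Type*} [NormedAddCommGroup H] [InnerProductSpace ℂ H] [CompleteSpace H]
    (A : StarSubalgebra ℂ (H →L[ℂ] H))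
    (hvN : Set.centralizer (Set.centralizer (A : Set (H →L[ℂ] H))) = (A : Set (H →L[ℂ] H)))
    (hAcomm : ∀ a ∈ A, ∀ b ∈ A, a * b = b * a)
    (hnz : ∃ a ∈ A, a ≠ 0)
    (hdiffuse : ¬ ∃ q ∈ A, IsSelfAdjoint q ∧ IsIdempotentElem q ∧ q ≠ 0 ∧
      (∀ r ∈ A, IsSelfAdjoint r → IsIdempotentElem r → r ≤ q → r = 0 ∨ r = q)) :
    ¬ ∃ E : (H →L[ℂ] H) →ₗ[ℂ] (H →L[ℂ] H),
      (∀ x : H →L[ℂ] H, E x ∈ A) ∧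
      (∀ a ∈ A, E a = a) ∧
      (∀ x : H →L[ℂ] H, 0 ≤ x → 0 ≤ E x) ∧
      (∀ a ∈ A, ∀ b ∈ A, ∀ x : H →L[ℂ] H, E (a * x * b) = a * E x * b) ∧
      (∀ x : H →L[ℂ] H, 0 ≤ x → E x = 0 → x = 0) := by
  rintro ⟨E, hEA, hEid, hEpos, hEmod, hEf⟩
  obtain ⟨a₀, -, ha₀⟩ := hnz
  obtain ⟨ξ, hξ⟩ : ∃ ξ : H, ξ ≠ 0 := by
    by_contra hcon
    push Not at hcon
    exact ha₀ (by ext x; rw [hcon x]; simp)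
  set p : H →L[ℂ] H := InnerProductSpace.rankOne ℂ ξ ξ with hp
  have hp_apply : ∀ x, p x = inner ℂ ξ x • ξ := fun x => by
    rw [hp, InnerProductSpace.rankOne_apply]
  have hp0 : 0 ≤ p := by
    rw [ContinuousLinearMap.nonneg_iff_isPositive]
    exact InnerProductSpace.isPositive_rankOne_self ξ
  have hpne : p ≠ 0 := by
    intro h
    have := hp_apply ξ
    rw [h] at this
    have h2 : inner ℂ ξ ξ • ξ ≠ 0 := smul_ne_zero (inner_self_ne_zero.mpr hξ) hξ
    exact h2 (by rw [← this]; simp)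
  set a := E p with ha
  have ha0 : 0 ≤ a := hEpos p hp0
  have hane : a ≠ 0 := fun h => hpne (hEf p hp0 h)
  have hapos : 0 < ‖a‖ := norm_pos_iff.mpr hane
  obtain ⟨δ, hδ, hδa⟩ : ∃ δ : ℝ, 0 < δ ∧ δ < ‖a‖ := exists_between hapos
  set c : H →L[ℂ] H := a - algebraMap ℝ (H →L[ℂ] H) δ with hc
  have hcsa : IsSelfAdjoint c :=
    (IsSelfAdjoint.of_nonneg ha0).sub (IsSelfAdjoint.algebraMap _ (IsSelfAdjoint.all δ))
  set b := c⁺ with hb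
  have hb0 : 0 ≤ b := CFC.posPart_nonneg c
  have hbne : b ≠ 0 := by
    intro h
    have h1 : c ≤ 0 := by
      have := CFC.posPart_sub_negPart c hcsa
      rw [← this, ← hb, h, zero_sub]
      exact neg_nonpos.mpr (CFC.negPart_nonneg c)
    have h2 : a ≤ algebraMap ℝ (H →L[ℂ] H) δ := sub_nonpos.mp h1
    have := (CStarAlgebra.norm_le_iff_le_algebraMap a hδ.le ha0).mpr h2
    linarith
  have hcb : c * b = b * b := by
    have h1 := CFC.posPart_sub_negPart c hcsa
    have h2 := CFC.negPart_mul_posPart c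
    calc c * b = (c⁺ - c⁻) * c⁺ := by rw [h1]
      _ = b * b := by rw [sub_mul, h2, sub_zero]
  have heA := range_proj_mem A hvN b (by
    intro T hT
    have h1 : Commute a T := hT a (hEA p)
    have h2 : Commute c T := h1.sub_left (Algebra.commute_algebraMap_left δ T)
    rw [hb, CFC.posPart_def]
    exact h2.cfcₙ_real _)
  set U := b.range.topologicalClosure with hU
  set e := U.starProjection with he
  have hUb : ∀ x, b x ∈ U := fun x => subset_closure ⟨x, rfl⟩
  have hene : e ≠ 0 := by
    intro h
    apply hbne
    ext x
    have := Submodule.starProjection_eq_self_iff.mpr (hUb x)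
    rw [← he, h] at this
    simpa using this.symm
  have hlow : ∀ y ∈ U, δ * ‖y‖ ^ 2 ≤ (inner ℂ (a y) y).re := by
    intro y hy
    have hcl : IsClosed {y : H | δ * ‖y‖ ^ 2 ≤ (inner ℂ (a y) y).re} :=
      isClosed_le (by fun_prop)
        (Complex.continuous_re.comp (a.continuous.inner continuous_id))
    refine closure_minimal ?_ hcl hy
    rintro _ ⟨x, rfl⟩
    simp only [Set.mem_ofPred_eq, ContinuousLinearMap.coe_coe]
    have hbp := (ContinuousLinearMap.nonneg_iff_isPositive b).mp hb0
    have h1 := hbp.re_inner_nonneg_left (b x)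
    have h2 : b (b x) = a (b x) - (δ : ℂ) • b x := by
      have : c (b x) = b (b x) := DFunLike.congr_fun hcb x
      rw [← this, hc]
      simp [Algebra.algebraMap_eq_smul_one]
    rw [h2, inner_sub_left, inner_smul_left, inner_self_eq_norm_sq_to_K] at h1
    have h3 : (inner ℂ (a (b x)) (b x) - (starRingEnd ℂ) (δ : ℂ) * ((‖b x‖ : ℂ)) ^ 2).re
        = (inner ℂ (a (b x)) (b x)).re - δ * ‖b x‖ ^ 2 := by
      rw [Complex.sub_re, Complex.conj_ofReal, ← Complex.ofReal_pow, ← Complex.ofReal_mul,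
        Complex.ofReal_re]
    have h4 : 0 ≤ (inner ℂ (a (b x)) (b x) - (starRingEnd ℂ) (δ : ℂ) * ((‖b x‖ : ℂ)) ^ 2).re := h1
    rw [h3] at h4
    linarith
  have hup : ∀ f ∈ A, IsStarProjection f → ∀ y, f y = y →
      (inner ℂ (a y) y).re ≤ ‖f ξ‖ ^ 2 * ‖y‖ ^ 2 := by
    intro f hfA hf y hfy
    set t : ℂ := ((‖f ξ‖ ^ 2 : ℝ) : ℂ) with ht
    have hsym : ∀ u v, inner ℂ (f u) v = inner ℂ u (f v) := hf.isSelfAdjoint.isSymmetric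
    have hff : ∀ u, f (f u) = f u := fun u => DFunLike.congr_fun hf.isIdempotentElem.eq u
    have hpos : 0 ≤ t • f - f * p * f := by
      rw [ContinuousLinearMap.nonneg_iff_isPositive, ContinuousLinearMap.isPositive_def']
      refine ⟨?_, ?_⟩
      · have hfp : IsSelfAdjoint (f * p * f) := by
          have h := (IsSelfAdjoint.of_nonneg hp0).conjugate f
          rwa [hf.isSelfAdjoint.star_eq] at h
        refine IsSelfAdjoint.sub (IsSelfAdjoint.smul ?_ hf.isSelfAdjoint) hfp
        rw [IsSelfAdjoint, ht]; exact Complex.conj_ofReal _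
      · intro x
        rw [ContinuousLinearMap.reApplyInnerSelf_apply]
        have e1 : inner ℂ ((t • f - f * p * f) x) x
            = ((‖f ξ‖ ^ 2 * ‖f x‖ ^ 2 - ‖inner ℂ (f ξ) (f x)‖ ^ 2 : ℝ) : ℂ) := by
          have i1 : inner ℂ (f x) x = ((‖f x‖ ^ 2 : ℝ) : ℂ) := by
            rw [← hff x, hsym, hff, inner_self_eq_norm_sq_to_K]; simp
          have i2 : inner ℂ ξ (f x) = inner ℂ (f ξ) (f x) := by rw [hsym, hff]
          have i3 : (f * p * f) x = inner ℂ ξ (f x) • f ξ := by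
            simp [ContinuousLinearMap.mul_apply', hp_apply]
          rw [sub_apply, inner_sub_left, i3, inner_smul_left, hsym ξ x,
            smul_apply, inner_smul_left, i1, i2, ht, Complex.conj_ofReal,
            Complex.conj_mul']
          push_cast; rfl
        rw [e1]
        have cs := norm_inner_le_norm (𝕜 := ℂ) (f ξ) (f x)
        have : ‖inner ℂ (f ξ) (f x)‖ ^ 2 ≤ (‖f ξ‖ * ‖f x‖) ^ 2 := by gcongr
        rw [mul_pow] at this
        simp only [RCLike.ofReal_re, Complex.ofReal_re, RCLike.re_to_complex]
        linarith
    have h := hEpos _ hpos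
    rw [map_sub, map_smul, hEid f hfA, hEmod f hfA f hfA p, ← ha,
      ContinuousLinearMap.nonneg_iff_isPositive] at h
    have h1 : 0 ≤ (inner ℂ ((t • f - f * a * f) y) y).re := h.re_inner_nonneg_left y
    have i3 : (f * a * f) y = f (a y) := by
      simp [ContinuousLinearMap.mul_apply', hfy]
    rw [sub_apply, inner_sub_left, i3, hsym, hfy,
      smul_apply, inner_smul_left, hfy, ht, Complex.conj_ofReal,
      inner_self_eq_norm_sq_to_K, Complex.sub_re] at h1
    have h2 : (((‖f ξ‖ ^ 2 : ℝ) : ℂ) * ((‖y‖ : ℝ) : ℂ) ^ 2).re = ‖f ξ‖ ^ 2 * ‖y‖ ^ 2 := by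
      rw [← Complex.ofReal_pow, ← Complex.ofReal_mul, Complex.ofReal_re]
    have h3 : 0 ≤ (((‖f ξ‖ ^ 2 : ℝ) : ℂ) * ((‖y‖ : ℝ) : ℂ) ^ 2).re - (inner ℂ (a y) y).re := h1
    rw [h2] at h3
    linarith
  have heP : IsStarProjection e := isStarProjection_starProjection
  have hall : ∀ n : ℕ, δ ≤ (1 / 2 : ℝ) ^ n * ‖e ξ‖ ^ 2 := by
    intro n
    obtain ⟨f, hfA, hf, hf0, hef, hle⟩ := halving A hdiffuse e heA heP hene ξ n
    obtain ⟨x, hx⟩ : ∃ x, f x ≠ 0 := by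
      by_contra hcon
      push Not at hcon
      exact hf0 (by ext x; simpa using hcon x)
    have hfy : f (f x) = f x := DFunLike.congr_fun hf.isIdempotentElem.eq x
    have hyU : f x ∈ U := by
      have : e (f x) = f x := DFunLike.congr_fun hef x
      rw [← this]
      exact Submodule.starProjection_apply_mem _ _
    have h1 := (hlow _ hyU).trans (hup f hfA hf _ hfy)
    have hpos : 0 < ‖f x‖ ^ 2 := by positivity
    exact (le_of_mul_le_mul_right h1 hpos).trans hle
  have hlim : Filter.Tendsto (fun n : ℕ => (1 / 2 : ℝ) ^ n * ‖e ξ‖ ^ 2) Filter.atTop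
      (nhds (0 * ‖e ξ‖ ^ 2)) :=
    (tendsto_pow_atTop_nhds_zero_of_lt_one (by norm_num) (by norm_num)).mul_const _
  have := ge_of_tendsto' hlim hall
  linarith
end
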